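/- arXiv:1012.1797 — 2 statements merged into one kernel-verified Lean document; each statement's English description precedes it below -/
import Mathlib

section
/- For every γ ∈ J_k^{reg}(1,n) the homomorphism φ(γ) has rank k, and for every ψ ∈ 𝔾_k = J_k^{reg}(1,1) one has im φ(γ ∘ ψ) = im φ(γ). Consequently the assignment γ ↦ im φ(γ) descends to an injective map φ^{Gr} : J_k^{reg}(1,n)/𝔾_k ↪ Grass(k, Sym^{≤k}ℂ^n), and the assignment sending γ to the flag (im(φ(γ)|_{span(e_1,…,e_j)}))_{j=1}^k descends to an injective map φ^{Flag} : J_k^{reg}(1,n)/𝔾_k ↪ Flag_k(Sym^{≤k}ℂ^n); moreover φ^{Gr} = π_k ∘ φ^{Flag}, where π_k sends a full flag of k subspaces to its k-dimensional member. -/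
open scoped BigOperators

namespace JetPaper

/-- Monomials in `n` variables of degree between `1` and `k`:
these index the standard basis of `Sym^{≤k}ℂ^n = ⊕_{l=1}^k Sym^l ℂ^n`. -/
def Mon (n k : ℕ) : Type := {m : Fin n → ℕ // 0 < ∑ i, m i ∧ ∑ i, m i ≤ k}

noncomputable instance (n k : ℕ) : Fintype (Mon n k) :=
  Fintype.ofInjective
    (fun m : Mon n k => (fun i => (⟨m.1 i, Nat.lt_succ_of_le
        ((Finset.single_le_sum (fun _ _ => Nat.zero_le _) (Finset.mem_univ i)).trans
          m.2.2)⟩ : Fin (k + 1))))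
    (fun _ _ h => Subtype.ext (funext fun i => congrArg Fin.val (congrFun h i)))

/-- The matrix coefficient of the `GL(n)`-action on `Sym^{≤k}ℂ^n` induced by the standard
action on `ℂ^n` (`g·e_i = ∑_j g_{ji} e_j`), in the monomial basis:
`symMat g m m'` is the coefficient of the monomial `m` in the image of the monomial `m'`. -/
noncomputable def symMat {n k : ℕ} (g : Matrix (Fin n) (Fin n) ℂ) (m m' : Mon n k) : ℂ :=
  MvPolynomial.coeff (Finsupp.equivFunOnFinite.symm m.1)
    (∏ i : Fin n, (∑ j : Fin n, g j i • MvPolynomial.X j) ^ (m'.1 i))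

/-- The induced action of `g ∈ GL(n)` on `(Sym^{≤k}ℂ^n)^{⊗k}`, in coordinates.
Elements of the `k`-th tensor power of `Sym^{≤k}ℂ^n` are recorded by their coordinates
in the basis indexed by `k`-tuples of monomials; `⋀^k(Sym^{≤k}ℂ^n)` is realised inside the
tensor power as the space of antisymmetric tensors. -/
noncomputable def actV {n k : ℕ} (g : Matrix (Fin n) (Fin n) ℂ)
    (T : (Fin k → Mon n k) → ℂ) : (Fin k → Mon n k) → ℂ :=
  fun mf => ∑ mf' : Fin k → Mon n k, (∏ i, symMat g (mf i) (mf' i)) * T mf'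

/-- The wedge product `v₁ ∧ ⋯ ∧ v_k` of `k` elements of `Sym^{≤k}ℂ^n`, realised as an
antisymmetric tensor in `(Sym^{≤k}ℂ^n)^{⊗k}` (in coordinates). -/
noncomputable def wedge {n k : ℕ} (v : Fin k → (Mon n k → ℂ)) : (Fin k → Mon n k) → ℂ :=
  fun mf => ∑ σ : Equiv.Perm (Fin k), ((Equiv.Perm.sign σ : ℤ) : ℂ) * ∏ i, v (σ i) (mf i)

/-- The `j`-th coordinate polynomial of `φ(γ) ∈ Hom(ℂ^k, Sym^{≤k}ℂ^n)` for
`γ ∈ Hom(ℂ^k, ℂ^n)`: the sum over all `s ≥ 1` and all ordered `s`-tuples `(i₁,…,i_s)` of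
positive integers with `i₁+⋯+i_s = j` of the product (in the symmetric algebra,
realised as the polynomial ring in `n` variables) of the `i₁`-th, …, `i_s`-th columns
of `γ`.  A tuple of length `s = l+1` is recorded as a function `a : Fin (l+1) → Fin k`,
the value `a t` standing for the positive integer `(a t) + 1`. -/
noncomputable def colPoly {n k : ℕ} (γ : Matrix (Fin n) (Fin k) ℂ) (j : Fin k) :
    MvPolynomial (Fin n) ℂ :=
  ∑ l : Fin k, ∑ a : Fin (l.val + 1) → Fin k,
    if (∑ t, ((a t).val + 1)) = j.val + 1 then
      ∏ t, (∑ i : Fin n, γ i (a t) • MvPolynomial.X i)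
    else 0

/-- The map `φ : Hom(ℂ^k,ℂ^n) → Hom(ℂ^k, Sym^{≤k}ℂ^n)` as a matrix in the monomial basis:
rows are indexed by monomials, columns by `Fin k`. -/
noncomputable def phiMat {n k : ℕ} (γ : Matrix (Fin n) (Fin k) ℂ) :
    Matrix (Mon n k) (Fin k) ℂ :=
  fun m j => MvPolynomial.coeff (Finsupp.equivFunOnFinite.symm m.1) (colPoly γ j)

/-- `φ^{Proj}` at the level of vectors: the wedge `φ(γ)e₁ ∧ ⋯ ∧ φ(γ)e_k` of the columns of
`φ(γ)`, an element of `⋀^k(Sym^{≤k}ℂ^n)` in coordinates. -/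
noncomputable def wedgePhi {n k : ℕ} (γ : Matrix (Fin n) (Fin k) ℂ) :
    (Fin k → Mon n k) → ℂ :=
  wedge (fun j m => phiMat γ m j)

/-- The matrix of the reparametrization jet with parameters `α = (α₁,…,α_k)`
(`α_s` is recorded as `α ⟨s-1⟩`): the `(i,j)` entry is
`∑_{s₁+⋯+s_i = j, s_l ≥ 1} α_{s₁}⋯α_{s_i}` (rows and columns of `Fin k` represent
the integers `1,…,k`). -/
noncomputable def repMat (k : ℕ) (α : Fin k → ℂ) : Matrix (Fin k) (Fin k) ℂ :=
  fun i j => ∑ a : Fin (i.val + 1) → Fin k,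
    if (∑ t, ((a t).val + 1)) = j.val + 1 then ∏ t, α (a t) else 0

/-- The reparametrization group `𝔾_k ⊂ GL(k,ℂ)`. -/
def Gset (k : ℕ) : Set (Matrix (Fin k) (Fin k) ℂ) :=
  {g | ∃ α : Fin k → ℂ, (∀ i : Fin k, i.val = 0 → α i ≠ 0) ∧ g = repMat k α}

/-- The unipotent radical `𝕌_k ⊂ 𝔾_k`: the matrices `repMat k α` with `α₁ = 1`. -/
def Uset (k : ℕ) : Set (Matrix (Fin k) (Fin k) ℂ) :=
  {g | ∃ α : Fin k → ℂ, (∀ i : Fin k, i.val = 0 → α i = 1) ∧ g = repMat k α}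

/-- The distinguished point
`p_k = e₁ ∧ (e₂ + e₁²) ∧ ⋯ ∧ (∑_{i₁+⋯+i_s = k} e_{i₁}⋯e_{i_s}) ∈ ⋀^k(Sym^{≤k}ℂ^k)`,
i.e. the wedge of the columns of `φ(1)`. -/
noncomputable def pkVec (k : ℕ) : (Fin k → Mon k k) → ℂ :=
  wedgePhi (1 : Matrix (Fin k) (Fin k) ℂ)


/-- The partial flag `(im(φ(γ)|_{span(e₁,…,e_{j+1})}))_j`: the `(j+1)`-st member is the span
of the first `j+1` columns of `φ(γ)`. -/
noncomputable def flagPhi {n k : ℕ} (γ : Matrix (Fin n) (Fin k) ℂ) (j : Fin k) :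
    Submodule ℂ (Mon n k → ℂ) :=
  Submodule.span ℂ {v | ∃ i : Fin k, i ≤ j ∧ v = fun m => phiMat γ m i}

section Helpers

open Polynomial in
/-- The truncated curve polynomial. -/
noncomputable def curveP {R : Type*} [CommRing R] {k : ℕ} (v : Fin k → R) : Polynomial R :=
  ∑ i : Fin k, Polynomial.C (v i) * Polynomial.X ^ (i.val + 1)

/-- Generic version of `repMat`. -/
noncomputable def genMat {R : Type*} [CommRing R] {k : ℕ} (v : Fin k → R) :
    Matrix (Fin k) (Fin k) R :=
  fun l j => (curveP v ^ (l.val + 1)).coeff (j.val + 1)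

lemma genMat_eq {R : Type*} [CommRing R] {k : ℕ} (v : Fin k → R) (l j : Fin k) :
    genMat v l j = ∑ a : Fin (l.val + 1) → Fin k,
      if (∑ t, ((a t).val + 1)) = j.val + 1 then ∏ t, v (a t) else 0 := by
  have h : curveP v ^ (l.val + 1) = ∏ _t : Fin (l.val + 1), curveP v := by simp
  unfold genMat
  rw [h]
  unfold curveP
  rw [Fintype.prod_sum, Polynomial.finsetSum_coeff]
  refine Finset.sum_congr rfl fun a _ => ?_
  rw [Finset.prod_mul_distrib, ← map_prod, Finset.prod_pow_eq_pow_sum,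
    Polynomial.coeff_C_mul_X_pow]
  simp only [eq_comm]

lemma repMat_eq (k : ℕ) (α : Fin k → ℂ) : repMat k α = genMat α := by
  ext l j
  rw [genMat_eq]; rfl

lemma curveP_dvd {R : Type*} [CommRing R] {k : ℕ} (v : Fin k → R) :
    Polynomial.X ∣ curveP v := by
  unfold curveP
  refine Finset.dvd_sum fun i _ => ?_
  exact Dvd.dvd.mul_left (dvd_pow_self _ (by omega)) _

lemma curveP_pow_coeff {R : Type*} [CommRing R] {k : ℕ} (v : Fin k → R) (m d : ℕ) (h : d < m) :
    (curveP v ^ m).coeff d = 0 :=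
  Polynomial.X_pow_dvd_iff.mp (pow_dvd_pow_of_dvd (curveP_dvd v) m) d h

lemma curveP_coeff {R : Type*} [CommRing R] {k : ℕ} (v : Fin k → R) (j : Fin k) :
    (curveP v).coeff (j.val + 1) = v j := by
  unfold curveP
  rw [Polynomial.finsetSum_coeff]
  simp only [Polynomial.coeff_C_mul_X_pow, add_left_inj]
  rw [Finset.sum_eq_single j]
  · simp
  · intro b _ hb
    rw [if_neg]
    intro h
    exact hb (Fin.ext h.symm)
  · simp

lemma genMat_tri {R : Type*} [CommRing R] {k : ℕ} (v : Fin k → R) (l j : Fin k) (h : j < l) :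
    genMat v l j = 0 :=
  curveP_pow_coeff v _ _ (by simpa using h)

lemma curveP_pow_coeff_self {R : Type*} [CommRing R] {k : ℕ} (hk : 0 < k) (v : Fin k → R)
    (m : ℕ) : (curveP v ^ m).coeff m = v ⟨0, hk⟩ ^ m := by
  obtain ⟨q, hq⟩ := curveP_dvd v
  have h0 : v ⟨0, hk⟩ = q.coeff 0 := by
    have := curveP_coeff v ⟨0, hk⟩
    rw [hq] at this
    simpa using this.symm
  rw [hq, mul_pow, h0]
  have := Polynomial.coeff_X_pow_mul (q ^ m) m 0
  rw [zero_add] at this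
  rw [this, Polynomial.coeff_zero_eq_eval_zero, Polynomial.eval_pow,
    ← Polynomial.coeff_zero_eq_eval_zero]

lemma genMat_det {R : Type*} [CommRing R] {k : ℕ} (hk : 0 < k) (v : Fin k → R) :
    (genMat v).det = ∏ i : Fin k, v ⟨0, hk⟩ ^ (i.val + 1) := by
  rw [Matrix.det_of_upperTriangular]
  · refine Finset.prod_congr rfl fun i _ => ?_
    exact curveP_pow_coeff_self hk v _
  · intro i j h
    exact genMat_tri v i j h

lemma genMat_det_ne {k : ℕ} (hk : 0 < k) (v : Fin k → ℂ) :
    (genMat v).det ≠ 0 ↔ v ⟨0, hk⟩ ≠ 0 := by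
  rw [genMat_det hk, Finset.prod_ne_zero_iff]
  constructor
  · intro h h0
    have := h ⟨0, hk⟩ (Finset.mem_univ _)
    rw [h0] at this
    simp at this
  · intro h i _
    exact pow_ne_zero _ h

/-- Coefficients of a composition with a curve. -/
lemma comp_coeff {R : Type*} [CommRing R] {k : ℕ} (p : Polynomial R) (hp : p.coeff 0 = 0)
    (w : Fin k → R) (j : Fin k) :
    (p.comp (curveP w)).coeff (j.val + 1) = ∑ i : Fin k, p.coeff (i.val + 1) * genMat w i j := by
  have hN : p.natDegree < p.natDegree + k + 1 := by omega
  rw [Polynomial.comp, Polynomial.eval₂_eq_sum_range' _ hN, Polynomial.finsetSum_coeff]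
  simp only [Polynomial.coeff_C_mul]
  rw [Finset.sum_range_succ', hp, zero_mul, add_zero]
  have : ∀ i ∈ Finset.range (p.natDegree + k), i ∉ Finset.range k →
      p.coeff (i + 1) * (curveP w ^ (i + 1)).coeff (j.val + 1) = 0 := by
    intro i _ hi
    rw [curveP_pow_coeff, mul_zero]
    have := j.2
    simp at hi
    omega
  rw [← Finset.sum_subset (Finset.range_mono (by omega)) this, Finset.sum_range]
  rfl

lemma pow_coeff_congr {R : Type*} [CommRing R] (k : ℕ) (p q : Polynomial R)
    (h : ∀ d < k, p.coeff d = q.coeff d) (m d : ℕ) (hd : d < k) :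
    (p ^ m).coeff d = (q ^ m).coeff d := by
  have h1 : Polynomial.X ^ k ∣ p - q := by
    rw [Polynomial.X_pow_dvd_iff]
    intro d hd
    rw [Polynomial.coeff_sub, h d hd, sub_self]
  have h2 := h1.trans (sub_dvd_pow_sub_pow p q m)
  have := Polynomial.X_pow_dvd_iff.mp h2 d hd
  rw [Polynomial.coeff_sub] at this
  exact sub_eq_zero.mp this

lemma coeff_zero_of_dvd {R : Type*} [CommRing R] {p : Polynomial R} (h : Polynomial.X ∣ p) :
    p.coeff 0 = 0 := Polynomial.X_dvd_iff.mp h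

lemma genMat_mul {R : Type*} [CommRing R] {k : ℕ} (v w : Fin k → R) :
    genMat v * genMat w = genMat (Matrix.vecMul v (genMat w)) := by
  ext l j
  have h0 : (curveP v ^ (l.val + 1)).coeff 0 = 0 := curveP_pow_coeff v _ _ (by omega)
  have h1 := comp_coeff _ h0 w j
  rw [Matrix.mul_apply]
  change ∑ i : Fin k, (curveP v ^ (l.val + 1)).coeff (i.val + 1) * genMat w i j = _
  rw [← h1, Polynomial.pow_comp]
  unfold genMat
  refine pow_coeff_congr (k + 1) _ _ ?_ _ _ (by omega)
  intro d hd
  rcases d with _ | d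
  · rw [coeff_zero_of_dvd (curveP_dvd _), Polynomial.coeff_zero_eq_eval_zero,
      Polynomial.eval_comp, ← Polynomial.coeff_zero_eq_eval_zero,
      coeff_zero_of_dvd (curveP_dvd _), ← Polynomial.coeff_zero_eq_eval_zero,
      coeff_zero_of_dvd (curveP_dvd _)]
  · have := comp_coeff _ (coeff_zero_of_dvd (curveP_dvd v)) w ⟨d, by omega⟩
    refine this.trans ?_
    refine Eq.trans ?_ (curveP_coeff _ (⟨d, by omega⟩ : Fin k)).symm
    simp only [curveP_coeff]
    rfl

lemma genMat_map {R S : Type*} [CommRing R] [CommRing S] {k : ℕ} (f : R →+* S) (v : Fin k → R)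
    (l j : Fin k) : f (genMat v l j) = genMat (fun i => f (v i)) l j := by
  rw [genMat_eq, genMat_eq, map_sum]
  refine Finset.sum_congr rfl fun a _ => ?_
  split_ifs <;> simp

lemma genMat_one {k : ℕ} (hk : 0 < k) :
    genMat (Pi.single (⟨0, hk⟩ : Fin k) (1 : ℂ)) = 1 := by
  have h : curveP (Pi.single (⟨0, hk⟩ : Fin k) (1 : ℂ)) = Polynomial.X := by
    unfold curveP
    rw [Finset.sum_eq_single ⟨0, hk⟩]
    · simp
    · intro b _ hb
      simp [Pi.single_eq_of_ne hb]
    · simp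
  ext i j
  unfold genMat
  rw [h, Polynomial.coeff_X_pow, Matrix.one_apply]
  congr 1
  simp [Fin.ext_iff, eq_comm]

lemma genMat_inv {k : ℕ} (hk : 0 < k) (v : Fin k → ℂ) (hv : v ⟨0, hk⟩ ≠ 0) :
    ∃ h : Fin k → ℂ, h ⟨0, hk⟩ ≠ 0 ∧ genMat h * genMat v = 1 := by
  have hd : IsUnit (genMat v).det := isUnit_iff_ne_zero.mpr ((genMat_det_ne hk v).mpr hv)
  have key : genMat (Matrix.vecMul (Pi.single (⟨0, hk⟩ : Fin k) (1 : ℂ)) (genMat v)⁻¹)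
      * genMat v = 1 := by
    rw [genMat_mul, Matrix.vecMul_vecMul, Matrix.nonsing_inv_mul _ hd, Matrix.vecMul_one,
      genMat_one hk]
  refine ⟨_, ?_, key⟩
  rw [← genMat_det_ne hk]
  intro h0
  have := congrArg Matrix.det key
  rw [Matrix.det_mul, h0] at this
  simp at this

/-- Columns of `γ` as linear forms. -/
noncomputable def linForm {n k : ℕ} (γ : Matrix (Fin n) (Fin k) ℂ) (j : Fin k) :
    MvPolynomial (Fin n) ℂ := ∑ i : Fin n, γ i j • MvPolynomial.X i

lemma colPoly_eq {n k : ℕ} (γ : Matrix (Fin n) (Fin k) ℂ) (j : Fin k) :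
    colPoly γ j = ∑ l : Fin k, genMat (linForm γ) l j := by
  unfold colPoly
  refine Finset.sum_congr rfl fun l _ => ?_
  rw [genMat_eq]
  rfl

lemma linForm_hom {n k : ℕ} (γ : Matrix (Fin n) (Fin k) ℂ) (j : Fin k) :
    (linForm γ j).IsHomogeneous 1 := by
  refine MvPolynomial.IsHomogeneous.sum _ _ _ fun i _ => ?_
  rw [MvPolynomial.smul_eq_C_mul]
  have := (MvPolynomial.isHomogeneous_C (Fin n) (γ i j)).mul (MvPolynomial.isHomogeneous_X ℂ i)
  simpa using this

lemma genMat_hom {n k : ℕ} (γ : Matrix (Fin n) (Fin k) ℂ) (l j : Fin k) :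
    (genMat (linForm γ) l j).IsHomogeneous (l.val + 1) := by
  rw [genMat_eq]
  refine MvPolynomial.IsHomogeneous.sum _ _ _ fun a _ => ?_
  split_ifs
  · have := MvPolynomial.IsHomogeneous.prod Finset.univ (fun t => linForm γ (a t))
      (fun _ => 1) (fun t _ => linForm_hom γ (a t))
    simpa using this
  · exact MvPolynomial.isHomogeneous_zero _ _ _

lemma linForm_mul {n k : ℕ} (γ : Matrix (Fin n) (Fin k) ℂ) (α : Fin k → ℂ) :
    linForm (γ * genMat α) =
      Matrix.vecMul (linForm γ) (genMat (fun i => (MvPolynomial.C (α i) :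
        MvPolynomial (Fin n) ℂ))) := by
  ext1 j
  simp only [Matrix.vecMul, dotProduct, linForm, Matrix.mul_apply]
  simp only [← genMat_map (MvPolynomial.C (σ := Fin n) (R := ℂ)) α, Finset.sum_mul,
    Finset.sum_smul]
  rw [Finset.sum_comm]
  refine Finset.sum_congr rfl fun i _ => Finset.sum_congr rfl fun x _ => ?_
  simp only [MvPolynomial.smul_eq_C_mul, map_mul]
  ring

lemma phiMat_mul {n k : ℕ} (γ : Matrix (Fin n) (Fin k) ℂ) (α : Fin k → ℂ) :
    phiMat (γ * genMat α) = phiMat γ * genMat α := by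
  ext m j
  have : colPoly (γ * genMat α) j = ∑ i : Fin k, MvPolynomial.C (genMat α i j) * colPoly γ i := by
    simp only [colPoly_eq, linForm_mul, ← genMat_mul, Matrix.mul_apply, Finset.mul_sum]
    rw [Finset.sum_comm]
    refine Finset.sum_congr rfl fun i _ => Finset.sum_congr rfl fun x _ => ?_
    rw [genMat_map, mul_comm]
  rw [Matrix.mul_apply]
  unfold phiMat
  rw [this, MvPolynomial.coeff_sum]
  refine Finset.sum_congr rfl fun i _ => ?_
  rw [MvPolynomial.coeff_C_mul, mul_comm]

lemma phiMat_eq {n k : ℕ} (γ : Matrix (Fin n) (Fin k) ℂ) (l j : Fin k) (m : Mon n k)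
    (hm : ∑ i, m.1 i = l.val + 1) :
    phiMat γ m j = MvPolynomial.coeff (Finsupp.equivFunOnFinite.symm m.1)
      (genMat (linForm γ) l j) := by
  unfold phiMat
  rw [colPoly_eq, MvPolynomial.coeff_sum, Finset.sum_eq_single l]
  · intro b _ hb
    refine (genMat_hom γ b j).coeff_eq_zero ?_
    rw [Finsupp.degree_eq_sum]
    simp only [Finsupp.equivFunOnFinite_symm_apply_apply]
    rw [hm]
    intro h
    exact hb (Fin.ext (by omega))
  · simp

lemma genMat_of_phiMat {n k : ℕ} (γ₁ γ₂ : Matrix (Fin n) (Fin k) ℂ)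
    (B : Matrix (Fin k) (Fin k) ℂ) (h : phiMat γ₁ = phiMat γ₂ * B) (l j : Fin k) :
    genMat (linForm γ₁) l j = ∑ i, MvPolynomial.C (B i j) * genMat (linForm γ₂) l i := by
  ext m
  rw [MvPolynomial.coeff_sum]
  simp only [MvPolynomial.coeff_C_mul]
  by_cases hm : m.degree = l.val + 1
  · have hs : ∑ i, m i = l.val + 1 := by rw [← hm, Finsupp.degree_eq_sum]
    let m' : Mon n k := ⟨⇑m, by omega, by omega⟩
    have h' := congrFun (congrFun h m') j
    rw [phiMat_eq γ₁ l j m' hs, Matrix.mul_apply] at h'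
    have e : Finsupp.equivFunOnFinite.symm m'.1 = m := by ext; simp [m']
    rw [e] at h'
    rw [h']
    refine Finset.sum_congr rfl fun i _ => ?_
    rw [phiMat_eq γ₂ l i m' hs, e, mul_comm]
  · rw [(genMat_hom γ₁ l j).coeff_eq_zero hm, Finset.sum_eq_zero]
    intro i _
    rw [(genMat_hom γ₂ l i).coeff_eq_zero hm, mul_zero]

lemma eval_linForm {n k : ℕ} (γ : Matrix (Fin n) (Fin k) ℂ) (x : Fin n → ℂ) (j : Fin k) :
    MvPolynomial.eval x (linForm γ j) = Matrix.vecMul x γ j := by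
  simp [linForm, Matrix.vecMul, dotProduct, MvPolynomial.smul_eval, mul_comm]

lemma genMat_eval {n k : ℕ} (γ₁ γ₂ : Matrix (Fin n) (Fin k) ℂ)
    (B : Matrix (Fin k) (Fin k) ℂ) (h : phiMat γ₁ = phiMat γ₂ * B) (x : Fin n → ℂ) :
    genMat (Matrix.vecMul x γ₁) = genMat (Matrix.vecMul x γ₂) * B := by
  ext l j
  have := congrArg (MvPolynomial.eval x) (genMat_of_phiMat γ₁ γ₂ B h l j)
  simp only [map_sum, map_mul, MvPolynomial.eval_C, genMat_map, eval_linForm] at this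
  rw [Matrix.mul_apply]
  refine this.trans (Finset.sum_congr rfl fun i _ => mul_comm _ _)

lemma gamma_of_phiMat {n k : ℕ} (hk : 0 < k) (γ₁ γ₂ : Matrix (Fin n) (Fin k) ℂ)
    (B : Matrix (Fin k) (Fin k) ℂ) (h : phiMat γ₁ = phiMat γ₂ * B) : γ₁ = γ₂ * B := by
  ext i j
  have h1 := congrFun (congrFun (genMat_eval γ₁ γ₂ B h (Pi.single i 1)) ⟨0, hk⟩) j
  rw [Matrix.mul_apply] at h1
  simp only [genMat, zero_add, pow_one, curveP_coeff, Matrix.single_one_vecMul] at h1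
  rw [Matrix.mul_apply]
  exact h1

lemma exists_good {n k : ℕ} (hk : 0 < k) (γ : Matrix (Fin n) (Fin k) ℂ)
    (h : ∃ i, γ i ⟨0, hk⟩ ≠ 0) : ∃ x : Fin n → ℂ, Matrix.vecMul x γ ⟨0, hk⟩ ≠ 0 := by
  obtain ⟨i, hi⟩ := h
  refine ⟨Pi.single i 1, ?_⟩
  rw [Matrix.single_one_vecMul]
  exact hi

lemma phi_rank {n k : ℕ} (hk : 0 < k) (γ : Matrix (Fin n) (Fin k) ℂ)
    (h : ∃ i, γ i ⟨0, hk⟩ ≠ 0) : (phiMat γ).rank = k := by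
  obtain ⟨x, hx⟩ := exists_good hk γ h
  obtain ⟨g, -, hg⟩ := genMat_inv hk _ hx
  have hinj : Function.Injective (phiMat γ).mulVecLin := by
    rw [← LinearMap.ker_eq_bot, LinearMap.ker_eq_bot']
    intro z hz
    rw [Matrix.mulVecLin_apply] at hz
    have h1 : phiMat γ = phiMat γ * (1 + Matrix.vecMulVec z 1) := by
      rw [Matrix.mul_add, Matrix.mul_one, Matrix.mul_vecMulVec, hz, Matrix.zero_vecMulVec,
        add_zero]
    have h2 := congrArg (genMat g * ·) (genMat_eval γ γ _ h1 x)
    simp only [← Matrix.mul_assoc, hg, Matrix.one_mul] at h2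
    have h3 : Matrix.vecMulVec z (1 : Fin k → ℂ) = 0 := by
      simpa using h2
    ext i
    have := congrFun (congrFun h3 i) ⟨0, hk⟩
    simpa [Matrix.vecMulVec_apply] using this
  unfold Matrix.rank
  rw [LinearMap.finrank_range_of_inj hinj]
  simp

lemma phi_inj {n k : ℕ} (hk : 0 < k) (γ₁ γ₂ : Matrix (Fin n) (Fin k) ℂ)
    (h₁ : ∃ i, γ₁ i ⟨0, hk⟩ ≠ 0) (h₂ : ∃ i, γ₂ i ⟨0, hk⟩ ≠ 0)
    (hr : LinearMap.range (Matrix.mulVecLin (phiMat γ₁)) =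
        LinearMap.range (Matrix.mulVecLin (phiMat γ₂))) :
    ∃ ψ ∈ Gset k, γ₁ = γ₂ * ψ := by
  have hcol : ∀ j : Fin k, ∃ b : Fin k → ℂ,
      (phiMat γ₂).mulVecLin b = (phiMat γ₁).mulVecLin (Pi.single j 1) := by
    intro j
    have : (phiMat γ₁).mulVecLin (Pi.single j 1) ∈ LinearMap.range (phiMat γ₁).mulVecLin :=
      ⟨_, rfl⟩
    rw [hr] at this
    exact this
  choose b hb using hcol
  have hB : phiMat γ₁ = phiMat γ₂ * (Matrix.of fun i j => b j i) := by
    ext m j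
    have := congrFun (hb j) m
    rw [Matrix.mulVecLin_apply, Matrix.mulVecLin_apply, Matrix.mulVec_single_one] at this
    rw [Matrix.mul_apply]
    exact this.symm
  generalize (Matrix.of fun i j => b j i) = B at hB
  have hγ := gamma_of_phiMat hk _ _ _ hB
  obtain ⟨x, hx⟩ := exists_good hk γ₂ h₂
  obtain ⟨g, -, hg⟩ := genMat_inv hk _ hx
  have h2 := congrArg (genMat g * ·) (genMat_eval γ₁ γ₂ _ hB x)
  simp only [← Matrix.mul_assoc, hg, Matrix.one_mul] at h2
  rw [genMat_mul] at h2
  generalize Matrix.vecMul g (genMat (Matrix.vecMul x γ₁)) = β at h2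
  refine ⟨B, ⟨β, ?_, ?_⟩, hγ⟩
  · intro i hi h0
    obtain ⟨r, hr⟩ := h₁
    apply hr
    have hi' : i = ⟨0, hk⟩ := Fin.ext hi
    rw [hγ, Matrix.mul_apply, ← h2]
    refine Finset.sum_eq_zero fun s _ => ?_
    by_cases hs : s = ⟨0, hk⟩
    · subst hs
      have : genMat β ⟨0, hk⟩ ⟨0, hk⟩ = β ⟨0, hk⟩ := by
        simpa [genMat] using curveP_coeff β ⟨0, hk⟩
      rw [this, ← hi', h0, mul_zero]
    · rw [genMat_tri, mul_zero]
      rw [Fin.lt_def]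
      exact Nat.pos_of_ne_zero fun h => hs (Fin.ext h)
  · rw [repMat_eq, h2]

lemma Gset_inv {k : ℕ} (hk : 0 < k) (ψ : Matrix (Fin k) (Fin k) ℂ) (hψ : ψ ∈ Gset k) :
    ∃ v w : Fin k → ℂ, ψ = genMat v ∧ genMat v * genMat w = 1 := by
  obtain ⟨α, hα, rfl⟩ := hψ
  obtain ⟨h, -, h1⟩ := genMat_inv hk α (hα _ rfl)
  exact ⟨α, h, repMat_eq k α, mul_eq_one_comm.mp h1⟩

lemma range_le {n k : ℕ} (γ : Matrix (Fin n) (Fin k) ℂ) (v : Fin k → ℂ) :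
    LinearMap.range (Matrix.mulVecLin (phiMat (γ * genMat v))) ≤
        LinearMap.range (Matrix.mulVecLin (phiMat γ)) := by
  rw [phiMat_mul, Matrix.mulVecLin_mul]
  exact LinearMap.range_comp_le_range _ _

lemma flag_le {n k : ℕ} (γ : Matrix (Fin n) (Fin k) ℂ) (v : Fin k → ℂ) (j : Fin k) :
    flagPhi (γ * genMat v) j ≤ flagPhi γ j := by
  unfold flagPhi
  rw [Submodule.span_le]
  rintro _ ⟨i, hi, rfl⟩
  have : (fun m => phiMat (γ * genMat v) m i) =
      ∑ s : Fin k, genMat v s i • (fun m => phiMat γ m s) := by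
    ext m
    rw [phiMat_mul, Matrix.mul_apply, Finset.sum_apply]
    exact Finset.sum_congr rfl fun s _ => mul_comm _ _
  rw [this]
  refine Submodule.sum_mem _ fun s _ => ?_
  by_cases hs : s ≤ i
  · exact Submodule.smul_mem _ _ (Submodule.subset_span ⟨s, hs.trans hi, rfl⟩)
  · rw [genMat_tri v s i (not_le.mp hs), zero_smul]
    exact Submodule.zero_mem _

lemma flag_top {n k : ℕ} (γ : Matrix (Fin n) (Fin k) ℂ) (j : Fin k) (hj : j.val = k - 1) :
    flagPhi γ j = LinearMap.range (Matrix.mulVecLin (phiMat γ)) := by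
  rw [Matrix.range_mulVecLin]
  unfold flagPhi
  congr 1
  ext v
  constructor
  · rintro ⟨i, -, rfl⟩
    exact ⟨i, rfl⟩
  · rintro ⟨i, rfl⟩
    refine ⟨i, ?_, rfl⟩
    rw [Fin.le_def]
    omega

end Helpers

/-- `φ(γ)` has rank `k` for regular `γ`; `im φ(γ∘ψ) = im φ(γ)` for
`ψ ∈ 𝔾_k`; the induced maps `φ^{Gr}` to the Grassmannian and `φ^{Flag}` to the flag
manifold are injective on `𝔾_k`-orbits; and `φ^{Gr} = π_k ∘ φ^{Flag}`. -/
theorem phi_descends_injectively (n k : ℕ) (hk : 1 ≤ k) (hn : 1 ≤ n) :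
    -- φ(γ) has rank k for every regular γ
    (∀ γ : Matrix (Fin n) (Fin k) ℂ, (∃ i, γ i ⟨0, hk⟩ ≠ 0) → (phiMat γ).rank = k) ∧
    -- the image subspace is invariant under precomposition with ψ ∈ 𝔾_k
    (∀ γ : Matrix (Fin n) (Fin k) ℂ, (∃ i, γ i ⟨0, hk⟩ ≠ 0) → ∀ ψ ∈ Gset k,
      LinearMap.range (Matrix.mulVecLin (phiMat (γ * ψ))) =
        LinearMap.range (Matrix.mulVecLin (phiMat γ))) ∧
    -- φ^{Gr} is injective on 𝔾_k-orbits
    (∀ γ₁ γ₂ : Matrix (Fin n) (Fin k) ℂ,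
      (∃ i, γ₁ i ⟨0, hk⟩ ≠ 0) → (∃ i, γ₂ i ⟨0, hk⟩ ≠ 0) →
      LinearMap.range (Matrix.mulVecLin (phiMat γ₁)) =
        LinearMap.range (Matrix.mulVecLin (phiMat γ₂)) →
      ∃ ψ ∈ Gset k, γ₁ = γ₂ * ψ) ∧
    -- the flag is invariant under precomposition with ψ ∈ 𝔾_k
    (∀ γ : Matrix (Fin n) (Fin k) ℂ, (∃ i, γ i ⟨0, hk⟩ ≠ 0) → ∀ ψ ∈ Gset k,
      flagPhi (γ * ψ) = flagPhi γ) ∧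
    -- φ^{Flag} is injective on 𝔾_k-orbits
    (∀ γ₁ γ₂ : Matrix (Fin n) (Fin k) ℂ,
      (∃ i, γ₁ i ⟨0, hk⟩ ≠ 0) → (∃ i, γ₂ i ⟨0, hk⟩ ≠ 0) →
      flagPhi γ₁ = flagPhi γ₂ → ∃ ψ ∈ Gset k, γ₁ = γ₂ * ψ) ∧
    -- φ^{Gr} = π_k ∘ φ^{Flag}: the top member of the flag is the image of φ(γ)
    (∀ γ : Matrix (Fin n) (Fin k) ℂ, (∃ i, γ i ⟨0, hk⟩ ≠ 0) →
      flagPhi γ ⟨k - 1, by omega⟩ = LinearMap.range (Matrix.mulVecLin (phiMat γ))) := by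
  have key : ∀ γ : Matrix (Fin n) (Fin k) ℂ, ∀ v w : Fin k → ℂ, genMat v * genMat w = 1 →
      (γ * genMat v) * genMat w = γ := by
    intro γ v w h
    rw [Matrix.mul_assoc, h, Matrix.mul_one]
  refine ⟨fun γ h => phi_rank hk γ h, ?_, fun γ₁ γ₂ h₁ h₂ h => phi_inj hk γ₁ γ₂ h₁ h₂ h,
    ?_, ?_, fun γ _ => flag_top γ _ rfl⟩
  · intro γ _ ψ hψ
    obtain ⟨v, w, rfl, hvw⟩ := Gset_inv hk ψ hψ
    refine le_antisymm (range_le γ v) ?_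
    have := range_le (γ * genMat v) w
    rwa [key γ v w hvw] at this
  · intro γ _ ψ hψ
    obtain ⟨v, w, rfl, hvw⟩ := Gset_inv hk ψ hψ
    funext j
    refine le_antisymm (flag_le γ v j) ?_
    have := flag_le (γ * genMat v) w j
    rwa [key γ v w hvw] at this
  · intro γ₁ γ₂ h₁ h₂ h
    refine phi_inj hk γ₁ γ₂ h₁ h₂ ?_
    rw [← flag_top γ₁ ⟨k - 1, by omega⟩ rfl, ← flag_top γ₂ ⟨k - 1, by omega⟩ rfl, h]

end JetPaper
end

section
/- Suppose k ≥ 4. There is a constant C(k) such that for all strictly positive integers a, b with b/a > C(k), if x lies in the closure, in (∧^k(Sym^{≤k}ℂ^k))^{⊗a} ⊗ (ℂ^k)^{⊗b}, of the orbit T_k·(p_k^{⊗a} ⊗ e_1^{⊗b}) under the maximal torus T_k of SL(k,ℂ), then either x ∈ T_k·(p_k^{⊗a} ⊗ e_1^{⊗b}) or the stabiliser of x in SL(k,ℂ) has dimension at least k+1. -/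
open scoped BigOperators ENNReal

namespace JetPaper

/-- The representation space `(⋀^k(Sym^{≤k}ℂ^k))^{⊗a} ⊗ (ℂ^k)^{⊗b}`, in coordinates:
the exterior power is realised inside `(Sym^{≤k}ℂ^k)^{⊗k}`. -/
abbrev Wab (k a b : ℕ) : Type := ((Fin a → Fin k → Mon k k) × (Fin b → Fin k)) → ℂ

/-- The basis vector `e₁ ∈ ℂ^k` (indicator of the first coordinate). -/
def e1 (k : ℕ) : Fin k → ℂ := fun i => if (i : ℕ) = 0 then 1 else 0

/-- The point `p_k^{⊗a} ⊗ e₁^{⊗b}`. -/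
noncomputable def ptab (k a b : ℕ) : Wab k a b :=
  fun x => (∏ i, pkVec k (x.1 i)) * ∏ j, e1 k (x.2 j)

/-- The natural action of `g ∈ GL(k,ℂ)` on `(⋀^k(Sym^{≤k}ℂ^k))^{⊗a} ⊗ (ℂ^k)^{⊗b}`
(extension of the standard action on `ℂ^k`), in coordinates. -/
noncomputable def actab {k a b : ℕ} (g : Matrix (Fin k) (Fin k) ℂ) (T : Wab k a b) :
    Wab k a b :=
  fun x => ∑ y : (Fin a → Fin k → Mon k k) × (Fin b → Fin k),
    (∏ i, ∏ l, symMat g (x.1 i l) (y.1 i l)) * (∏ j, g (x.2 j) (y.2 j)) * T y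

/-- The standard Borel subgroup `B_k` of upper triangular matrices in `SL(k,ℂ)`. -/
def Bset (k : ℕ) : Set (Matrix (Fin k) (Fin k) ℂ) :=
  {g | g.det = 1 ∧ ∀ i j : Fin k, j < i → g i j = 0}

/-- The standard maximal torus `T_k` of diagonal matrices in `SL(k,ℂ)`. -/
def Tset (k : ℕ) : Set (Matrix (Fin k) (Fin k) ℂ) :=
  {g | g.det = 1 ∧ ∀ i j : Fin k, i ≠ j → g i j = 0}

/-- The stabiliser in `SL(k,ℂ)` of a point `x`, as a subset of the space of `k×k`
matrices (for its Hausdorff dimension: a complex algebraic group of dimension `d`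
has real Hausdorff dimension `2d`). -/
noncomputable def stabSet {k a b : ℕ} (x : Wab k a b) : Set (Fin k → Fin k → ℂ) :=
  {g | (Matrix.of g).det = 1 ∧ actab (Matrix.of g) x = x}

section part1

/-- The algebra endomorphism of the polynomial ring induced by a matrix. -/
noncomputable def phiHom {k : ℕ} (g : Matrix (Fin k) (Fin k) ℂ) :
    MvPolynomial (Fin k) ℂ →ₐ[ℂ] MvPolynomial (Fin k) ℂ :=
  MvPolynomial.aeval (fun i => ∑ j : Fin k, g j i • MvPolynomial.X j)

/-- The derivation of the polynomial ring induced by a matrix. -/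
noncomputable def derA {k : ℕ} (A : Matrix (Fin k) (Fin k) ℂ) :
    Derivation ℂ (MvPolynomial (Fin k) ℂ) (MvPolynomial (Fin k) ℂ) :=
  MvPolynomial.mkDerivation ℂ (fun i => ∑ j : Fin k, A j i • MvPolynomial.X j)

theorem phiHom_X {k : ℕ} (g : Matrix (Fin k) (Fin k) ℂ) (i : Fin k) :
    phiHom g (MvPolynomial.X i) = ∑ j : Fin k, g j i • MvPolynomial.X j := by
  simp [phiHom]

theorem derA_X {k : ℕ} (g : Matrix (Fin k) (Fin k) ℂ) (i : Fin k) :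
    derA g (MvPolynomial.X i) = ∑ j : Fin k, g j i • MvPolynomial.X j := by
  simp [derA, MvPolynomial.mkDerivation_X]

theorem phiHom_mul {k : ℕ} (g h : Matrix (Fin k) (Fin k) ℂ) (p : MvPolynomial (Fin k) ℂ) :
    phiHom (g * h) p = phiHom g (phiHom h p) := by
  have : phiHom (g * h) = (phiHom g).comp (phiHom h) := by
    apply MvPolynomial.algHom_ext
    intro i
    simp only [AlgHom.comp_apply, phiHom_X, map_sum, map_smul, Matrix.mul_apply, Finset.sum_smul,
      Finset.smul_sum, smul_smul]
    rw [Finset.sum_comm]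
    refine Finset.sum_congr rfl fun j _ => Finset.sum_congr rfl fun l _ => ?_
    rw [mul_comm]
  rw [this]; rfl

theorem derA_add {k : ℕ} (A B : Matrix (Fin k) (Fin k) ℂ) : derA (A + B) = derA A + derA B := by
  apply MvPolynomial.derivation_ext
  intro i
  simp [derA_X, add_smul, Finset.sum_add_distrib]

theorem derA_smul {k : ℕ} (c : ℂ) (A : Matrix (Fin k) (Fin k) ℂ) :
    derA (c • A) = c • derA A := by
  apply MvPolynomial.derivation_ext
  intro i
  simp [derA_X, Finset.smul_sum, mul_smul]

theorem derA_zero {k : ℕ} : derA (0 : Matrix (Fin k) (Fin k) ℂ) = 0 := by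
  apply MvPolynomial.derivation_ext
  intro i
  simp [derA_X]

theorem eval_phiHom {k : ℕ} (g : Matrix (Fin k) (Fin k) ℂ) (v : Fin k → ℂ)
    (p : MvPolynomial (Fin k) ℂ) :
    MvPolynomial.eval v (phiHom g p) = MvPolynomial.eval (Matrix.vecMul v g) p := by
  induction p using MvPolynomial.induction_on with
  | C a => simp [phiHom]
  | add p q hp hq => simp [hp, hq]
  | mul_X p i hp =>
    rw [map_mul, map_mul, hp, phiHom_X, map_mul]
    simp [Matrix.vecMul, dotProduct, mul_comm, MvPolynomial.smul_eval]

theorem hasDerivAt_eval {k : ℕ} (A : Matrix (Fin k) (Fin k) ℂ) (c : ℂ → Fin k → ℂ) (z : ℂ)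
    (hc : ∀ i, HasDerivAt (fun t => c t i) (Matrix.vecMul (c z) A i) z)
    (p : MvPolynomial (Fin k) ℂ) :
    HasDerivAt (fun t => MvPolynomial.eval (c t) p) (MvPolynomial.eval (c z) (derA A p)) z := by
  induction p using MvPolynomial.induction_on with
  | C a => simpa using hasDerivAt_const z a
  | add p q hp hq =>
    simp only [map_add]
    exact hp.add hq
  | mul_X p i hp =>
    have := hp.mul (hc i)
    simp only [map_mul, MvPolynomial.eval_X, Derivation.leibniz, derA_X]
    convert! this using 1
    simp [Matrix.vecMul, dotProduct, MvPolynomial.smul_eval, mul_comm, add_comm]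

section expo
attribute [local instance] Matrix.linftyOpNormedRing Matrix.linftyOpNormedAlgebra

theorem hasDerivAt_vecMul_exp {ι : Type*} [Fintype ι] [DecidableEq ι]
    (A : Matrix ι ι ℂ) (v : ι → ℂ) (z : ℂ) (i : ι) :
    HasDerivAt (fun t : ℂ => Matrix.vecMul v (NormedSpace.exp (t • A)) i)
      (Matrix.vecMul (Matrix.vecMul v (NormedSpace.exp (z • A))) A i) z := by
  have h := hasDerivAt_exp_smul_const (𝕂 := ℂ) A z
  let Φ : Matrix ι ι ℂ →ₗ[ℂ] ℂ :=
    { toFun := fun M => Matrix.vecMul v M i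
      map_add' := by intro M N; simp [Matrix.vecMul_add]
      map_smul' := by intro M N; simp [Matrix.vecMul_smul] }
  have h2 := (LinearMap.toContinuousLinearMap Φ).hasFDerivAt.comp_hasDerivAt z h
  rw [Matrix.vecMul_vecMul]
  exact h2

theorem exp_entry_deriv {ι : Type*} [Fintype ι] [DecidableEq ι]
    (A : Matrix ι ι ℂ) (z : ℂ) (i j : ι) :
    HasDerivAt (fun t : ℂ => (NormedSpace.exp (t • A)) i j)
      ((A * NormedSpace.exp (z • A)) i j) z := by
  have h := hasDerivAt_exp_smul_const' (𝕂 := ℂ) A z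
  let Φ : Matrix ι ι ℂ →ₗ[ℂ] ℂ :=
    { toFun := fun M => M i j
      map_add' := by intro M N; simp
      map_smul' := by intro M N; simp }
  exact (LinearMap.toContinuousLinearMap Φ).hasFDerivAt.comp_hasDerivAt z h

/-- linear ODE uniqueness -/
theorem ode_unique {ι : Type*} [Fintype ι] [DecidableEq ι]
    (N : Matrix ι ι ℂ) (h : ℂ → ι → ℂ)
    (hh : ∀ z i, HasDerivAt (fun t => h t i) (Matrix.vecMul (h z) N i) z) :
    h 1 = Matrix.vecMul (h 0) (NormedSpace.exp N) := by
  have key : ∀ j, ∀ z, HasDerivAt (fun t => Matrix.vecMul (h t) (NormedSpace.exp (t • (-N))) j) 0 z := by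
    intro j z
    simp only [Matrix.vecMul, dotProduct]
    have := HasDerivAt.fun_sum (u := Finset.univ) (fun i _ => (hh z i).mul (exp_entry_deriv (-N) z i j))
    convert! this using 1
    have e : ∀ u : ι → ℂ, ∀ M : Matrix ι ι ℂ, ∑ i, u i * M i j = Matrix.vecMul u M j := by
      intro u M; rfl
    rw [Finset.sum_add_distrib, e, e, Matrix.vecMul_vecMul, ← Pi.add_apply, ← Matrix.vecMul_add]
    simp
  have hconst : ∀ j, Matrix.vecMul (h 1) (NormedSpace.exp ((1:ℂ) • (-N))) j =
      Matrix.vecMul (h 0) (NormedSpace.exp ((0:ℂ) • (-N))) j := by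
    intro j
    exact is_const_of_deriv_eq_zero (fun z => (key j z).differentiableAt) (fun z => (key j z).deriv) 1 0
  have h2 : Matrix.vecMul (h 1) (NormedSpace.exp (-N)) = h 0 := by
    funext j
    have := hconst j
    simpa using this
  rw [← h2, Matrix.vecMul_vecMul, ← Matrix.exp_add_of_commute (-N) N (Commute.neg_left (Commute.refl N))]
  simp

theorem phiHom_exp {k : ℕ} {ι : Type*} [Fintype ι] [DecidableEq ι]
    (A : Matrix (Fin k) (Fin k) ℂ) (w : ι → MvPolynomial (Fin k) ℂ) (N : Matrix ι ι ℂ)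
    (h : ∀ j, derA A (w j) = ∑ i, N i j • w i) (j : ι) :
    phiHom (NormedSpace.exp A) (w j) = ∑ i, (NormedSpace.exp N) i j • w i := by
  apply MvPolynomial.funext
  intro v
  rw [eval_phiHom]
  have := ode_unique N (fun z i => MvPolynomial.eval (Matrix.vecMul v (NormedSpace.exp (z • A))) (w i))
    (by
      intro z i
      have := hasDerivAt_eval A (fun z => Matrix.vecMul v (NormedSpace.exp (z • A))) z
        (fun i => hasDerivAt_vecMul_exp A v z i) (w i)
      rw [h i] at this
      convert! this using 1
      simp [Matrix.vecMul, dotProduct, MvPolynomial.smul_eval, mul_comm])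
  have := congrFun this j
  simp only [one_smul, zero_smul, NormedSpace.exp_zero, Matrix.vecMul_one] at this
  rw [this]
  simp [Matrix.vecMul, dotProduct, MvPolynomial.smul_eval, mul_comm]

theorem det_exp' {ι : Type*} [Fintype ι] [DecidableEq ι] (A : Matrix ι ι ℂ) :
    (NormedSpace.exp A).det = Complex.exp A.trace := by
  -- the determinant is differentiable
  have hd : DifferentiableAt ℂ (fun M : Matrix ι ι ℂ => M.det) 1 := by
    simp only [Matrix.det_apply]
    have : ∀ i j : ι, DifferentiableAt ℂ (fun M : Matrix ι ι ℂ => M i j) 1 := by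
      intro i j
      let Φ : Matrix ι ι ℂ →ₗ[ℂ] ℂ :=
        { toFun := fun M => M i j
          map_add' := by intro M N; simp
          map_smul' := by intro M N; simp }
      exact (LinearMap.toContinuousLinearMap Φ).differentiableAt
    fun_prop
  obtain ⟨L, hL⟩ := hd
  have hLA : L A = A.trace := by
    have h1 : HasDerivAt (fun r : ℂ => (1 : Matrix ι ι ℂ) + r • A) A 0 := by
      have := ((hasDerivAt_id (0:ℂ)).smul_const A).const_add (1 : Matrix ι ι ℂ)
      rw [one_smul] at this
      exact this
    have h2 : HasDerivAt (fun r : ℂ => ((1 : Matrix ι ι ℂ) + r • A).det) (L A) 0 := by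
      have hL' : HasFDerivAt (fun M : Matrix ι ι ℂ => M.det) L ((1 : Matrix ι ι ℂ) + (0:ℂ) • A) := by
        simpa using hL
      exact hL'.comp_hasDerivAt (0:ℂ) h1
    have h3 : HasDerivAt (fun r : ℂ => ((1 : Matrix ι ι ℂ) + r • A).det) A.trace 0 := by
      let P : Polynomial ℂ := (1 + (Polynomial.X : Polynomial ℂ) • A.map Polynomial.C).det
      have e : ∀ r, ((1 : Matrix ι ι ℂ) + r • A).det = P.eval r := by
        intro r
        simp only [P]
        rw [← Polynomial.coe_evalRingHom, RingHom.map_det]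
        congr 1
        ext i j
        simp [Matrix.one_apply, apply_ite]
        ring
      simp only [e]
      have := P.hasDerivAt 0
      rwa [Matrix.derivative_det_one_add_X_smul] at this
    exact h2.unique h3
  have h0 : HasDerivAt (fun r : ℂ => (NormedSpace.exp (r • A)).det) A.trace 0 := by
    have h1 := hasDerivAt_exp_smul_const (𝕂 := ℂ) A 0
    have hL' : HasFDerivAt (fun M : Matrix ι ι ℂ => M.det) L (NormedSpace.exp ((0:ℂ) • A)) := by
      simpa using hL
    have := hL'.comp_hasDerivAt (0:ℂ) h1
    simp only [zero_smul, NormedSpace.exp_zero, one_mul] at this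
    rw [← hLA]
    exact this
  have hz : ∀ z, HasDerivAt (fun r : ℂ => (NormedSpace.exp (r • A)).det)
      ((NormedSpace.exp (z • A)).det * A.trace) z := by
    intro z
    have h1 : HasDerivAt (fun r : ℂ => (NormedSpace.exp (z • A)).det *
        (NormedSpace.exp ((r - z) • A)).det) ((NormedSpace.exp (z • A)).det * A.trace) z := by
      apply HasDerivAt.const_mul
      have : HasDerivAt (fun r : ℂ => (NormedSpace.exp (r • A)).det) A.trace (z - z) := by simpa using h0
      simpa using this.comp_sub_const z z
    convert! h1 using 1
    funext r
    rw [← Matrix.det_mul, ← Matrix.exp_add_of_commute, ← add_smul]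
    · simp
    · exact (Commute.refl A).smul_left _ |>.smul_right _
  have := ode_unique (ι := Unit) (Matrix.diagonal fun _ => A.trace)
    (fun z _ => (NormedSpace.exp (z • A)).det) (by
      intro z i
      simpa [Matrix.vecMul_diagonal] using hz z)
  have := congrFun this ()
  rw [Matrix.exp_diagonal] at this
  simp only [one_smul, zero_smul, NormedSpace.exp_zero, Matrix.det_one, Matrix.vecMul_diagonal, one_mul] at this
  rw [this, Complex.exp_eq_exp_ℂ, Pi.coe_exp]

/-- A set containing `T exp(J z) T⁻¹` for all `z` has dimension at least that of the
source of the injective linear map `J`. -/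
theorem dimH_ge_aux {k : ℕ} (S : Set (Fin k → Fin k → ℂ)) (d : ℕ)
    (J : (Fin d → ℂ) →ₗ[ℂ] Matrix (Fin k) (Fin k) ℂ) (hJ : Function.Injective J)
    (T T' : Matrix (Fin k) (Fin k) ℂ) (hT : T' * T = 1)
    (hS : ∀ z, (T * NormedSpace.exp (J z) * T' : Matrix (Fin k) (Fin k) ℂ) ∈ S) :
    ((2 * d : ℕ) : ℝ≥0∞) ≤ dimH S := by
  -- linear conjugation back
  let B : (Fin k → Fin k → ℂ) →ₗ[ℂ] Matrix (Fin k) (Fin k) ℂ :=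
    { toFun := fun M => T' * Matrix.of M * T
      map_add' := by
        intro M N
        have : Matrix.of (M + N) = Matrix.of M + Matrix.of N := rfl
        rw [this, mul_add, add_mul]
      map_smul' := by
        intro c M
        have : Matrix.of (c • M) = c • Matrix.of M := rfl
        rw [this, Matrix.mul_smul, Matrix.smul_mul]; rfl }
  obtain ⟨P, hP⟩ := LinearMap.exists_leftInverse_of_injective J (LinearMap.ker_eq_bot.mpr hJ)
  let Q : Matrix (Fin k) (Fin k) ℂ →L[ℂ] (Fin d → ℂ) := LinearMap.toContinuousLinearMap P
  let R : (Fin k → Fin k → ℂ) →L[ℂ] (Fin d → ℂ) := LinearMap.toContinuousLinearMap (P ∘ₗ B)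
  have hf : HasStrictFDerivAt (fun A : Fin d → ℂ => Q (NormedSpace.exp (J A)))
      (ContinuousLinearMap.id ℂ (Fin d → ℂ)) 0 := by
    have h1 : HasStrictFDerivAt (fun A : Fin d → ℂ => J A) (LinearMap.toContinuousLinearMap J) 0 :=
      (LinearMap.toContinuousLinearMap J).hasStrictFDerivAt
    have h2 : HasStrictFDerivAt NormedSpace.exp (1 : Matrix (Fin k) (Fin k) ℂ →L[ℂ] _)
      (J 0) := by rw [map_zero]; exact hasStrictFDerivAt_exp_zero
    have h3 := Q.hasStrictFDerivAt.comp (0 : Fin d → ℂ) (h2.comp (0 : Fin d → ℂ) h1)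
    refine h3.congr_fderiv ?_
    apply ContinuousLinearMap.ext
    intro A
    exact LinearMap.congr_fun hP A
  have hmap := hf.map_nhds_eq_of_surj (by simp)
  have hmem : R '' S ∈ nhds (Q (NormedSpace.exp (J 0))) := by
    rw [← hmap, Filter.mem_map]
    refine Filter.univ_mem' ?_
    intro A
    refine ⟨_, hS A, ?_⟩
    have : B (T * NormedSpace.exp (J A) * T') = NormedSpace.exp (J A) := by
      change T' * (T * NormedSpace.exp (J A) * T') * T = _
      rw [show T' * (T * NormedSpace.exp (J A) * T') * T =
        (T' * T) * NormedSpace.exp (J A) * (T' * T) by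
          simp only [mul_assoc], hT]
      simp
    change P (B _) = P _
    rw [this]
  have h1 : dimH (R '' S) = Module.finrank ℝ (Fin d → ℂ) := Real.dimH_of_mem_nhds hmem
  have h2 : dimH (R '' S) ≤ dimH S := R.lipschitz.dimH_image_le S
  refine le_trans ?_ h2
  rw [h1, finrank_real_of_complex]
  simp

theorem dimH_ge {k : ℕ} (S : Set (Fin k → Fin k → ℂ)) (H : Submodule ℂ (Matrix (Fin k) (Fin k) ℂ))
    (T T' : Matrix (Fin k) (Fin k) ℂ) (hT : T' * T = 1)
    (hS : ∀ A ∈ H, (T * NormedSpace.exp A * T' : Matrix (Fin k) (Fin k) ℂ) ∈ S) (n : ℕ)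
    (hn : n ≤ Module.finrank ℂ H) : ((2 * n : ℕ) : ℝ≥0∞) ≤ dimH S := by
  have h := dimH_ge_aux S (Module.finrank ℂ H)
    (H.subtype ∘ₗ (Module.finBasis ℂ H).equivFun.symm.toLinearMap)
    (by
      rw [LinearMap.coe_comp]
      exact H.injective_subtype.comp (LinearEquiv.injective _)) T T' hT
    (fun z => hS _ (Submodule.coe_mem _))
  refine le_trans ?_ h
  exact_mod_cast Nat.mul_le_mul_left 2 hn

end expo

end part1

section part2

theorem exists_pinv {V W : Type*} [AddCommGroup V] [Module ℝ V] [AddCommGroup W] [Module ℝ W]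
    (Φ : V →ₗ[ℝ] W) : ∃ R : W →ₗ[ℝ] V, ∀ v, Φ (R (Φ v)) = Φ v := by
  obtain ⟨g, hg⟩ := LinearMap.exists_rightInverse_of_surjective Φ.rangeRestrict
    (LinearMap.range_rangeRestrict Φ)
  obtain ⟨R, hR⟩ := LinearMap.exists_extend g
  refine ⟨R, fun v => ?_⟩
  have h1 : R (Φ v) = g (Φ.rangeRestrict v) := by
    rw [← hR]; rfl
  rw [h1]
  have h2 := LinearMap.congr_fun hg (Φ.rangeRestrict v)
  have h3 := congrArg Subtype.val h2
  exact h3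

theorem toric {k : ℕ} {ι : Type*} [Fintype ι] (n : ι → Fin k → ℕ) (t : ℕ → Fin k → ℂ)
    (ht : ∀ s i, t s i ≠ 0) (z : ι → ℂ)
    (hz : ∀ y, Filter.Tendsto (fun s => ∏ i, t s i ^ n y i) Filter.atTop (nhds (z y))) :
    ∃ τ : Fin k → ℂ, (∀ i, τ i ≠ 0) ∧ ∃ lam : Fin k → ℝ, ∀ y,
      0 ≤ ∑ i, (n y i : ℝ) * lam i ∧
      z y = if ∑ i, (n y i : ℝ) * lam i = 0 then ∏ i, τ i ^ n y i else 0 := by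
  classical
  -- extract a subsequence along which the phases converge
  have hcomp : IsCompact (Set.pi Set.univ (fun _ : Fin k => Metric.sphere (0 : ℂ) 1)) :=
    isCompact_univ_pi fun _ => isCompact_sphere 0 1
  obtain ⟨u, hu, φ, hφ, hlim⟩ := hcomp.tendsto_subseq
    (x := fun s i => t s i / (‖t s i‖ : ℂ)) (by
      intro s
      simp only [Set.mem_pi, Set.mem_univ, true_imp_iff, mem_sphere_zero_iff_norm]
      intro i
      have := norm_ne_zero_iff.mpr (ht s i)
      simp [this])
  have hu' : ∀ i, ‖u i‖ = 1 := by
    intro i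
    simpa using hu i (Set.mem_univ i)
  let L : ℕ → Fin k → ℝ := fun s i => Real.log ‖t (φ s) i‖
  have hLt : ∀ s i, t (φ s) i = (Real.exp (L s i) : ℂ) * (t (φ s) i / (‖t (φ s) i‖ : ℂ)) := by
    intro s i
    have h0 := norm_pos_iff.mpr (ht (φ s) i)
    have h1 : (‖t (φ s) i‖ : ℂ) ≠ 0 := by exact_mod_cast h0.ne'
    simp only [L, Real.exp_log h0]
    field_simp
  have hz' : ∀ y, Filter.Tendsto (fun s => ∏ i, t (φ s) i ^ n y i) Filter.atTop (nhds (z y)) :=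
    fun y => (hz y).comp hφ.tendsto_atTop
  have hnorm : ∀ s y, ‖∏ i, t (φ s) i ^ n y i‖ = Real.exp (∑ i, (n y i : ℝ) * L s i) := by
    intro s y
    rw [norm_prod, Real.exp_sum]
    refine Finset.prod_congr rfl fun i _ => ?_
    rw [norm_pow, Real.exp_nat_mul, Real.exp_log (norm_pos_iff.mpr (ht (φ s) i))]
  have hexp : ∀ y, Filter.Tendsto (fun s => Real.exp (∑ i, (n y i : ℝ) * L s i)) Filter.atTop
      (nhds ‖z y‖) := by
    intro y
    have := (hz' y).norm
    simpa only [hnorm] using this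
  let Φ : (Fin k → ℝ) →ₗ[ℝ] (ι → ℝ) :=
    { toFun := fun v y => if z y = 0 then 0 else ∑ i, (n y i : ℝ) * v i
      map_add' := by
        intro v w; funext y
        by_cases h : z y = 0 <;> simp [h, mul_add, Finset.sum_add_distrib]
      map_smul' := by
        intro c v; funext y
        by_cases h : z y = 0
        · simp [h]
        · simp only [h, if_false, Pi.smul_apply, smul_eq_mul, RingHom.id_apply, Finset.mul_sum]
          refine Finset.sum_congr rfl fun i _ => by ring }
  have hΦ : ∀ v y, z y ≠ 0 → Φ v y = ∑ i, (n y i : ℝ) * v i := by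
    intro v y h
    change (if z y = 0 then 0 else _) = _
    rw [if_neg h]
  obtain ⟨R, hR⟩ := exists_pinv Φ
  let c : ι → ℝ := fun y => if z y = 0 then 0 else Real.log ‖z y‖
  have hΦL : Filter.Tendsto (fun s => Φ (L s)) Filter.atTop (nhds c) := by
    rw [tendsto_pi_nhds]
    intro y
    by_cases h : z y = 0
    · have : ∀ s, Φ (L s) y = 0 := by
        intro s
        change (if z y = 0 then 0 else _) = _
        rw [if_pos h]
      simp only [this, c, h, if_true]
      exact tendsto_const_nhds
    · simp only [hΦ _ _ h, c, h, if_false]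
      have := (hexp y).log (norm_ne_zero_iff.mpr h)
      simpa using this
  let M : ℕ → Fin k → ℝ := fun s => R (Φ (L s))
  have hRc : Continuous R := LinearMap.continuous_of_finiteDimensional R
  have hM : Filter.Tendsto M Filter.atTop (nhds (R c)) := (hRc.tendsto c).comp hΦL
  have hMsum : ∀ s y, z y ≠ 0 → ∑ i, (n y i : ℝ) * M s i = ∑ i, (n y i : ℝ) * L s i := by
    intro s y h
    rw [← hΦ _ _ h, ← hΦ _ _ h, hR]
  have hMy : ∀ y, Filter.Tendsto (fun s => ∑ i, (n y i : ℝ) * M s i) Filter.atTop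
      (nhds (∑ i, (n y i : ℝ) * R c i)) := by
    intro y
    refine tendsto_finsetSum _ fun i _ => ?_
    exact ((tendsto_pi_nhds.mp hM) i).const_mul _
  refine ⟨fun i => (Real.exp (R c i) : ℂ) * u i, ?_, ?_⟩
  · intro i
    have : u i ≠ 0 := by
      intro h; have := hu' i; simp [h] at this
    exact mul_ne_zero (by exact_mod_cast (Real.exp_pos _).ne') this
  have hev : ∀ᶠ s in Filter.atTop, ∀ y, z y = 0 →
      0 < ∑ i, (n y i : ℝ) * (M s i - L s i) := by
    rw [Filter.eventually_all]
    intro y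
    by_cases h : z y = 0
    · have h1 := hexp y
      rw [h, norm_zero] at h1
      have h2 : Filter.Tendsto (fun s => Real.exp (-∑ i, (n y i : ℝ) * M s i)) Filter.atTop
        (nhds (Real.exp (-∑ i, (n y i : ℝ) * R c i))) :=
        (Real.continuous_exp.tendsto _).comp (hMy y).neg
      have h3 := h1.mul h2
      rw [zero_mul] at h3
      filter_upwards [h3.eventually (gt_mem_nhds one_pos)] with s hs _
      rw [← Real.exp_add, Real.exp_lt_one_iff] at hs
      simp only [mul_sub, Finset.sum_sub_distrib]
      linarith
    · exact Filter.Eventually.of_forall fun s h' => absurd h' h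
  obtain ⟨s, hs⟩ := hev.exists
  refine ⟨fun i => M s i - L s i, fun y => ?_⟩
  by_cases h : z y = 0
  · have := hs y h
    exact ⟨this.le, by rw [if_neg this.ne', h]⟩
  · have h0 : ∑ i, (n y i : ℝ) * (M s i - L s i) = 0 := by
      simp only [mul_sub, Finset.sum_sub_distrib]
      rw [hMsum s y h, sub_self]
    refine ⟨h0.ge, ?_⟩
    rw [if_pos h0]
    refine tendsto_nhds_unique (hz' y) ?_
    have e : ∀ s, ∏ i, t (φ s) i ^ n y i =
        ∏ i, ((Real.exp (M s i) : ℂ) * (t (φ s) i / (‖t (φ s) i‖ : ℂ))) ^ n y i := by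
      intro s
      have e1 : ∀ v : Fin k → ℝ, ∏ i, ((Real.exp (v i) : ℂ)) ^ n y i =
          (Real.exp (∑ i, (n y i : ℝ) * v i) : ℂ) := by
        intro v
        rw [Real.exp_sum]
        push_cast
        refine Finset.prod_congr rfl fun i _ => ?_
        rw [Complex.exp_nat_mul]
      simp only [mul_pow, Finset.prod_mul_distrib]
      rw [e1, hMsum s y h, ← e1, ← Finset.prod_mul_distrib]
      refine Finset.prod_congr rfl fun i _ => ?_
      rw [← mul_pow, ← hLt]
    simp only [e]
    refine tendsto_finsetProd _ fun i _ => ?_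
    refine Filter.Tendsto.pow (Filter.Tendsto.mul ?_ ?_) _
    · have := (Real.continuous_exp.tendsto _).comp ((tendsto_pi_nhds.mp hM) i)
      exact (Complex.continuous_ofReal.tendsto _).comp this
    · exact (tendsto_pi_nhds.mp hlim) i

end part2

section part3

/-- the exponent of a monomial as a finitely supported function -/
noncomputable def mexp {k : ℕ} (m : Mon k k) : Fin k →₀ ℕ := Finsupp.equivFunOnFinite.symm m.1

/-- coordinates of a polynomial in the monomial basis -/
noncomputable def coords {k : ℕ} (u : Fin k → MvPolynomial (Fin k) ℂ) : Fin k → Mon k k → ℂ :=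
  fun j m => MvPolynomial.coeff (mexp m) (u j)

/-- `(u₁ ∧ ⋯ ∧ u_k)^{⊗a} ⊗ v^{⊗b}` -/
noncomputable def tens {k : ℕ} (a b : ℕ) (u : Fin k → MvPolynomial (Fin k) ℂ) (v : Fin k → ℂ) :
    Wab k a b :=
  fun y => (∏ i, wedge (coords u) (y.1 i)) * ∏ j, v (y.2 j)

/-- polynomials lying in `Sym^{≤k}` -/
def MonSupp {k : ℕ} (u : MvPolynomial (Fin k) ℂ) : Prop :=
  ∀ m : Fin k →₀ ℕ, MvPolynomial.coeff m u ≠ 0 → 0 < ∑ i, m i ∧ ∑ i, m i ≤ k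

theorem mexp_injective {k : ℕ} : Function.Injective (mexp (k := k)) := by
  intro m m' h
  exact Subtype.ext (Finsupp.equivFunOnFinite.symm.injective h)

theorem symMat_eq {k : ℕ} (g : Matrix (Fin k) (Fin k) ℂ) (m m' : Mon k k) :
    symMat g m m' = MvPolynomial.coeff (mexp m) (phiHom g (MvPolynomial.monomial (mexp m') 1)) := by
  unfold symMat mexp
  congr 1
  rw [MvPolynomial.monomial_eq, map_one, one_mul, Finsupp.prod_fintype _ _ (by simp), map_prod]
  refine Finset.prod_congr rfl fun i _ => ?_
  rw [map_pow, phiHom_X]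
  rfl

theorem MonSupp.eq_sum {k : ℕ} {u : MvPolynomial (Fin k) ℂ} (hu : MonSupp u) :
    u = ∑ m : Mon k k, MvPolynomial.monomial (mexp m) (MvPolynomial.coeff (mexp m) u) := by
  classical
  ext s
  rw [MvPolynomial.coeff_sum]
  simp only [MvPolynomial.coeff_monomial]
  by_cases hs : 0 < ∑ i, s i ∧ ∑ i, s i ≤ k
  · have hm : mexp (⟨fun i => s i, hs⟩ : Mon k k) = s := by
      ext i; rfl
    refine Eq.trans ?_ (Finset.sum_eq_single (⟨fun i => s i, hs⟩ : Mon k k) ?_ ?_).symm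
    · rw [hm, if_pos rfl]
    · intro m' _ hne
      rw [if_neg]
      intro h
      exact hne (mexp_injective (h.trans hm.symm))
    · intro h
      exact absurd (Finset.mem_univ (α := Mon k k) _) h
  · have h0 : MvPolynomial.coeff s u = 0 := by
      by_contra h
      exact hs (hu s h)
    rw [h0, Finset.sum_eq_zero]
    intro m _
    rw [if_neg]
    intro h
    apply hs
    rw [← h]
    exact m.2

theorem sum_symMat {k : ℕ} (g : Matrix (Fin k) (Fin k) ℂ) (m : Mon k k)
    {u : MvPolynomial (Fin k) ℂ} (hu : MonSupp u) :
    ∑ m' : Mon k k, symMat g m m' * MvPolynomial.coeff (mexp m') u =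
      MvPolynomial.coeff (mexp m) (phiHom g u) := by
  conv_rhs => rw [hu.eq_sum, map_sum, MvPolynomial.coeff_sum]
  refine Finset.sum_congr rfl fun m' _ => ?_
  rw [symMat_eq]
  have : MvPolynomial.monomial (mexp m') (MvPolynomial.coeff (mexp m') u) =
      (MvPolynomial.coeff (mexp m') u) • MvPolynomial.monomial (mexp m') (1 : ℂ) := by
    rw [MvPolynomial.smul_monomial]; simp
  rw [this, map_smul, MvPolynomial.coeff_smul, smul_eq_mul, mul_comm]

theorem sum_wedge {k : ℕ} (s : Mon k k → Mon k k → ℂ) (v : Fin k → Mon k k → ℂ)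
    (mf : Fin k → Mon k k) :
    ∑ mf' : Fin k → Mon k k, (∏ l, s (mf l) (mf' l)) * wedge v mf' =
      wedge (fun j m => ∑ m', s m m' * v j m') mf := by
  classical
  unfold wedge
  simp only [Finset.mul_sum]
  rw [Finset.sum_comm]
  refine Finset.sum_congr rfl fun σ _ => ?_
  rw [Fintype.prod_sum, Finset.mul_sum]
  refine Finset.sum_congr rfl fun mf' _ => ?_
  rw [Finset.prod_mul_distrib]
  ring

theorem actab_tens {k a b : ℕ} (g : Matrix (Fin k) (Fin k) ℂ)
    (u : Fin k → MvPolynomial (Fin k) ℂ) (hu : ∀ j, MonSupp (u j)) (v : Fin k → ℂ) :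
    actab g (tens a b u v) = tens a b (fun j => phiHom g (u j)) (g.mulVec v) := by
  classical
  funext x
  unfold actab tens
  have h1 : coords (fun j => phiHom g (u j)) =
      fun j m => ∑ m', symMat g m m' * coords u j m' := by
    funext j m
    exact (sum_symMat g m (hu j)).symm
  rw [h1]
  simp only [← sum_wedge]
  rw [Fintype.prod_sum]
  simp only [Matrix.mulVec, dotProduct]
  rw [Fintype.prod_sum, Finset.sum_mul_sum, Fintype.sum_prod_type]
  refine Finset.sum_congr rfl fun y1 _ => Finset.sum_congr rfl fun y2 _ => ?_
  simp only [Finset.prod_mul_distrib]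
  ring

theorem wedge_eq_det {k : ℕ} (v : Fin k → Mon k k → ℂ) (mf : Fin k → Mon k k) :
    wedge v mf = Matrix.det (Matrix.of fun j i => v j (mf i)) := by
  rw [Matrix.det_apply]
  unfold wedge
  refine Finset.sum_congr rfl fun σ _ => ?_
  simp [Units.smul_def]

theorem wedge_lin {k : ℕ} (N : Matrix (Fin k) (Fin k) ℂ) (v : Fin k → Mon k k → ℂ)
    (mf : Fin k → Mon k k) :
    wedge (fun j m => ∑ i, N i j * v i m) mf = N.det * wedge v mf := by
  rw [wedge_eq_det, wedge_eq_det, ← Matrix.det_transpose N, ← Matrix.det_mul]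
  congr 1

theorem tens_lin {k a b : ℕ} (N : Matrix (Fin k) (Fin k) ℂ) (c : ℂ)
    (u : Fin k → MvPolynomial (Fin k) ℂ) (v : Fin k → ℂ) :
    tens a b (fun j => ∑ i, N i j • u i) (c • v) = (N.det ^ a * c ^ b) • tens a b u v := by
  funext y
  have h1 : coords (fun j => ∑ i, N i j • u i) = fun j m => ∑ i, N i j * coords u i m := by
    funext j m
    simp [coords, MvPolynomial.coeff_sum]
  simp only [tens, h1, wedge_lin, Pi.smul_apply, smul_eq_mul, Finset.prod_mul_distrib,
    Finset.prod_const, Finset.card_univ, Fintype.card_fin]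
  ring

/-- The stabiliser Lie algebra of the data `(w, e₁)`. -/
noncomputable def lieStab {k : ℕ} (a b : ℕ) (w : Fin k → MvPolynomial (Fin k) ℂ) (i0 : Fin k) :
    Submodule ℂ (Matrix (Fin k) (Fin k) ℂ) where
  carrier := {A | A.trace = 0 ∧ ∃ (N : Matrix (Fin k) (Fin k) ℂ) (γ : ℂ),
    (∀ j, derA A (w j) = ∑ i, N i j • w i) ∧ (∀ i, A i i0 = if i = i0 then γ else 0) ∧
      a * N.trace + b * γ = 0}
  zero_mem' := by
    refine ⟨by simp, 0, 0, ?_, by simp, by simp⟩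
    intro j
    simp [derA_zero]
  add_mem' := by
    rintro A B ⟨hA, N, γ, h1, h2, h3⟩ ⟨hB, N', γ', h1', h2', h3'⟩
    refine ⟨by simp [hA, hB], N + N', γ + γ', ?_, ?_, ?_⟩
    · intro j
      simp [derA_add, h1, h1', add_smul, Finset.sum_add_distrib]
    · intro i
      simp only [Matrix.add_apply, h2, h2']
      split_ifs <;> simp
    · rw [Matrix.trace_add]
      linear_combination h3 + h3'
  smul_mem' := by
    rintro c A ⟨hA, N, γ, h1, h2, h3⟩
    refine ⟨by simp [hA], c • N, c * γ, ?_, ?_, ?_⟩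
    · intro j
      simp [derA_smul, h1, Finset.smul_sum, mul_smul]
    · intro i
      simp only [Matrix.smul_apply, h2, smul_eq_mul]
      split_ifs <;> simp
    · rw [Matrix.trace_smul, smul_eq_mul]
      linear_combination c * h3

theorem exp_mulVec {k : ℕ} (A : Matrix (Fin k) (Fin k) ℂ) (i0 : Fin k) (γ : ℂ)
    (h : ∀ i, A i i0 = if i = i0 then γ else 0) :
    (NormedSpace.exp A).mulVec (Pi.single i0 1) = Complex.exp γ • Pi.single i0 1 := by
  classical
  have h1 := phiHom_exp (ι := Unit) A (fun _ => MvPolynomial.X i0)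
    (Matrix.diagonal fun _ => γ) (by
      intro j
      rw [derA_X]
      simp [h]) ()
  rw [phiHom_X, Matrix.exp_diagonal] at h1
  generalize NormedSpace.exp A = B at h1 ⊢
  funext i
  have h2 := congrArg (MvPolynomial.coeff (Finsupp.single i 1)) h1
  simp only [MvPolynomial.coeff_sum, MvPolynomial.coeff_smul, MvPolynomial.coeff_X,
    smul_eq_mul, Matrix.diagonal_apply_eq, Finset.univ_unique, Finset.sum_singleton,
    Pi.coe_exp] at h2
  rw [Complex.exp_eq_exp_ℂ, Matrix.mulVec_single_one]
  simp [Finsupp.single_left_inj] at h2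
  simp [Matrix.col_apply, Pi.single_apply, h2, eq_comm]

theorem dim_stab_tens {k a b : ℕ} (w : Fin k → MvPolynomial (Fin k) ℂ) (i0 : Fin k)
    (T T' : Matrix (Fin k) (Fin k) ℂ) (hT : T' * T = 1)
    (hTw : ∀ j, MonSupp (phiHom T (w j)))
    (n : ℕ) (hn : n ≤ Module.finrank ℂ (lieStab a b w i0)) :
    ((2 * n : ℕ) : ℝ≥0∞) ≤
      dimH (stabSet (tens a b (fun j => phiHom T (w j)) (T.mulVec (Pi.single i0 1)))) := by
  refine dimH_ge _ (lieStab a b w i0) T T' hT ?_ n hn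
  rintro A ⟨hA, N, γ, h1, h2, h3⟩
  have hT1 : T.det * T'.det = 1 := by
    rw [mul_comm, ← Matrix.det_mul, hT, Matrix.det_one]
  refine ⟨?_, ?_⟩
  · change (T * NormedSpace.exp A * T').det = 1
    rw [Matrix.det_mul, Matrix.det_mul, det_exp', hA, Complex.exp_zero, mul_one, hT1]
  · change actab (T * NormedSpace.exp A * T') _ = _
    have hTT : T * NormedSpace.exp A * T' * T = T * NormedSpace.exp A := by
      rw [mul_assoc, hT, mul_one]
    rw [actab_tens _ _ hTw, Matrix.mulVec_mulVec, hTT, ← Matrix.mulVec_mulVec,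
      exp_mulVec A i0 γ h2, Matrix.mulVec_smul]
    have e : (fun j => phiHom (T * NormedSpace.exp A * T') (phiHom T (w j))) =
        fun j => ∑ i, (NormedSpace.exp N) i j • phiHom T (w i) := by
      funext j
      rw [← phiHom_mul, hTT, phiHom_mul, phiHom_exp A w N h1]
      simp
    rw [e, tens_lin, det_exp', ← Complex.exp_nat_mul, ← Complex.exp_nat_mul, ← Complex.exp_add, h3]
    simp

theorem dim_stab_zero {k a b : ℕ} (n : ℕ) (hn : n + 1 ≤ k * k) :
    ((2 * n : ℕ) : ℝ≥0∞) ≤ dimH (stabSet (0 : Wab k a b)) := by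
  refine dimH_ge _ (LinearMap.ker (Matrix.traceLinearMap (Fin k) ℂ ℂ)) 1 1 (by simp) ?_ n ?_
  · intro A hA
    have hA' : A.trace = 0 := hA
    refine ⟨?_, ?_⟩
    · change (1 * NormedSpace.exp A * 1).det = 1
      rw [one_mul, mul_one, det_exp', hA', Complex.exp_zero]
    · funext y
      simp [actab]
  · have h := LinearMap.finrank_range_add_finrank_ker (Matrix.traceLinearMap (Fin k) ℂ ℂ)
    have h2 : Module.finrank ℂ (LinearMap.range (Matrix.traceLinearMap (Fin k) ℂ ℂ)) ≤ 1 := by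
      have := Submodule.finrank_le (LinearMap.range (Matrix.traceLinearMap (Fin k) ℂ ℂ))
      simpa using this
    have h3 : Module.finrank ℂ (Matrix (Fin k) (Fin k) ℂ) = k * k := by
      simp [Module.finrank_matrix]
    omega

end part3

section part4

/-- The variables, indexed by `1,…,k` inside `ℕ` (zero outside this range). -/
noncomputable def ev (R : Type) [CommSemiring R] (k n : ℕ) : MvPolynomial (Fin k) R :=
  if h : 1 ≤ n ∧ n ≤ k then MvPolynomial.X ⟨n - 1, by omega⟩ else 0

theorem ev_zero (R : Type) [CommSemiring R] (k : ℕ) : ev R k 0 = 0 := by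
  simp [ev]

theorem ev_succ (R : Type) [CommSemiring R] {k : ℕ} (i : Fin k) :
    ev R k (i + 1) = MvPolynomial.X i := by
  have h : 1 ≤ i.val + 1 ∧ i.val + 1 ≤ k := ⟨by omega, i.2⟩
  simp [ev, h]

/-- The combinatorial data of a degeneration. -/
structure Degen (k : ℕ) (L M : ℕ → ℝ) (W : ℕ → MvPolynomial (Fin k) ℂ) : Prop where
  M0 : M 0 = 0
  M1 : M 1 = L 1
  sub : ∀ i l, M (i + l) ≤ M i + M l
  ML : ∀ n, 1 ≤ n → n ≤ k → M n ≤ L n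
  W0 : W 0 = 0
  recW : ∀ n, 1 ≤ n → n ≤ k → W n = (if L n = M n then ev ℂ k n else 0) +
    ∑ p ∈ Finset.HasAntidiagonal.antidiagonal n, if L p.1 + M p.2 = M n then ev ℂ k p.1 * W p.2 else 0

/-- the shift matrix -/
noncomputable def shiftM (k t : ℕ) (c : ℕ → ℂ) : Matrix (Fin k) (Fin k) ℂ :=
  fun p q => if p.val + 1 + t = q.val + 1 then c (q + 1) else 0

theorem sum_shift {k t : ℕ} (ht : 1 ≤ t) (c : ℕ → ℂ) (f : ℕ → MvPolynomial (Fin k) ℂ)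
    (f0 : f 0 = 0) (q : Fin k) :
    ∑ p, shiftM k t c p q • f (p + 1) = c (q + 1) • f (q + 1 - t) := by
  by_cases h : t ≤ q
  · rw [Finset.sum_eq_single (⟨q - t, by omega⟩ : Fin k)]
    · have h1 : q.val - t + 1 + t = q.val + 1 := by omega
      have h2 : q.val - t + 1 = q.val + 1 - t := by omega
      simp only [shiftM]
      rw [if_pos h1, h2]
    · intro p _ hp
      have : ¬ (p.val + 1 + t = q.val + 1) := by
        intro h'
        apply hp
        ext
        simp
        omega
      simp [shiftM, this]
    · simp
  · have h1 : q.val + 1 - t = 0 := by omega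
    rw [h1, f0, smul_zero]
    refine Finset.sum_eq_zero fun p _ => ?_
    have : ¬ (p.val + 1 + t = q.val + 1) := by omega
    simp [shiftM, this]

theorem derA_shift {k t : ℕ} (ht : 1 ≤ t) (c : ℕ → ℂ) (n : ℕ) (h1 : 1 ≤ n) (hn : n ≤ k) :
    derA (shiftM k t c) (ev ℂ k n) = c n • ev ℂ k (n - t) := by
  obtain ⟨m, rfl⟩ : ∃ m, n = m + 1 := ⟨n - 1, by omega⟩
  have := sum_shift ht c (ev ℂ k) (ev_zero _ _) (⟨m, hn⟩ : Fin k)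
  have h2 := ev_succ ℂ (⟨m, hn⟩ : Fin k)
  simp only at this h2
  rw [← this, h2, derA_X]
  simp only [ev_succ]

theorem shift_mem {k t : ℕ} (a b : ℕ) (ht : 1 ≤ t) (c d : ℕ → ℂ)
    (W : ℕ → MvPolynomial (Fin k) ℂ) (W0 : W 0 = 0) (hk : 0 < k)
    (h : ∀ n, 1 ≤ n → n ≤ k → derA (shiftM k t c) (W n) = d n • W (n - t)) :
    shiftM k t c ∈ lieStab a b (fun j : Fin k => W (j + 1)) ⟨0, hk⟩ := by
  have htr : ∀ c, (shiftM k t c).trace = 0 := by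
    intro c
    refine Finset.sum_eq_zero fun p _ => ?_
    have : ¬ (p.val + 1 + t = p.val + 1) := by omega
    simp only [Matrix.diag_apply, shiftM]
    rw [if_neg this]
  refine ⟨htr c, shiftM k t d, 0, ?_, ?_, ?_⟩
  · intro j
    rw [h _ (by omega) (by omega), sum_shift ht d W W0 j]
  · intro i
    have : ¬ (i.val + 1 + t = 1) := by omega
    simp [shiftM, this]
  · rw [htr]; simp

variable {k : ℕ} {L M : ℕ → ℝ} {W : ℕ → MvPolynomial (Fin k) ℂ}

/-- applying a derivation to the recursion -/
theorem Degen.der (H : Degen k L M W)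
    (D : Derivation ℂ (MvPolynomial (Fin k) ℂ) (MvPolynomial (Fin k) ℂ)) (n : ℕ)
    (h1 : 1 ≤ n) (hn : n ≤ k) :
    D (W n) = (if L n = M n then D (ev ℂ k n) else 0) +
      (∑ p ∈ Finset.HasAntidiagonal.antidiagonal n,
        (if L p.1 + M p.2 = M n then D (ev ℂ k p.1) * W p.2 else 0) +
      ∑ p ∈ Finset.HasAntidiagonal.antidiagonal n,
        (if L p.1 + M p.2 = M n then ev ℂ k p.1 * D (W p.2) else 0)) := by
  rw [H.recW n h1 hn, map_add, map_sum, ← Finset.sum_add_distrib]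
  congr 1
  · split_ifs <;> simp
  · refine Finset.sum_congr rfl fun p _ => ?_
    split_ifs
    · rw [Derivation.leibniz, smul_eq_mul, smul_eq_mul]; ring
    · simp

theorem Degen.diag_eig (H : Degen k L M W) (A : Matrix (Fin k) (Fin k) ℂ)
    (hA : A = Matrix.diagonal fun i : Fin k => (L (i + 1) : ℂ)) (n : ℕ) (hn : n ≤ k) :
    derA A (W n) = (M n : ℂ) • W n := by
  have he : ∀ n, derA A (ev ℂ k n) = (L n : ℂ) • ev ℂ k n := by
    intro n
    by_cases h : 1 ≤ n ∧ n ≤ k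
    · obtain ⟨m, rfl⟩ : ∃ m, n = m + 1 := ⟨n - 1, by omega⟩
      have h2 := ev_succ ℂ (⟨m, h.2⟩ : Fin k)
      simp only at h2
      rw [h2, derA_X, Finset.sum_eq_single ⟨m, h.2⟩]
      · simp [hA]
      · intro p _ hp
        simp [hA, hp]
      · simp
    · simp [ev, h]
  induction n using Nat.strong_induction_on with
  | _ n ih =>
    rcases Nat.eq_zero_or_pos n with rfl | h1
    · simp [H.W0]
    rw [H.der _ n h1 hn, ← Finset.sum_add_distrib]
    conv_rhs => rw [H.recW n h1 hn, smul_add, Finset.smul_sum]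
    congr 1
    · split_ifs with h
      · rw [he, h]
      · simp
    · refine Finset.sum_congr rfl fun p hp => ?_
      rw [Finset.HasAntidiagonal.mem_antidiagonal] at hp
      split_ifs with h
      · rw [he]
        rcases Nat.eq_zero_or_pos p.1 with h0 | h0
        · simp [h0, ev_zero]
        · rw [ih p.2 (by omega) (by omega), ← h]
          simp only [MvPolynomial.smul_eq_C_mul, Complex.ofReal_add, map_add]
          ring
      · simp

theorem Degen.cond (H : Degen k L M W) {i l n : ℕ} (hn : i + l = n) (h1 : 1 ≤ i) (hk : n ≤ k)
    (h : L i + M l = M n) : L i = M i := by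
  have h2 := H.sub i l
  have h3 := H.ML i h1 (by omega)
  rw [hn] at h2
  linarith

theorem Degen.kill (H : Degen k L M W) (A : Matrix (Fin k) (Fin k) ℂ) (j : ℕ) (hj : L j ≠ M j)
    (hA : ∀ p q : Fin k, q.val + 1 ≠ j → A p q = 0) (n : ℕ) (hn : n ≤ k) :
    derA A (W n) = 0 := by
  have he : ∀ n, n ≠ j → derA A (ev ℂ k n) = 0 := by
    intro n hnj
    by_cases h : 1 ≤ n ∧ n ≤ k
    · obtain ⟨m, rfl⟩ : ∃ m, n = m + 1 := ⟨n - 1, by omega⟩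
      have h2 := ev_succ ℂ (⟨m, h.2⟩ : Fin k)
      simp only at h2
      rw [h2, derA_X]
      refine Finset.sum_eq_zero fun p _ => ?_
      rw [hA _ _ hnj, zero_smul]
    · simp [ev, h]
  induction n using Nat.strong_induction_on with
  | _ n ih =>
    rcases Nat.eq_zero_or_pos n with rfl | h1
    · simp [H.W0]
    rw [H.der _ n h1 hn]
    have e1 : (if L n = M n then derA A (ev ℂ k n) else 0) = 0 := by
      split_ifs with h
      · apply he
        rintro rfl
        exact hj h
      · rfl
    rw [e1, Finset.sum_eq_zero, Finset.sum_eq_zero]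
    · simp
    · intro p hp
      rw [Finset.HasAntidiagonal.mem_antidiagonal] at hp
      split_ifs with h
      · rcases Nat.eq_zero_or_pos p.1 with h0 | h0
        · simp [h0, ev_zero]
        · rw [ih _ (by omega) (by omega), mul_zero]
      · rfl
    · intro p hp
      rw [Finset.HasAntidiagonal.mem_antidiagonal] at hp
      split_ifs with h
      · rcases Nat.eq_zero_or_pos p.1 with h0 | h0
        · simp [h0, ev_zero]
        · rw [he, zero_mul]
          rintro h3
          exact hj (h3 ▸ H.cond hp h0 hn h)
      · rfl

theorem Degen.W1 (H : Degen k L M W) (hk : 1 ≤ k) : W 1 = ev ℂ k 1 := by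
  rw [H.recW 1 le_rfl hk, H.M1]
  simp [Finset.Nat.antidiagonal_succ, H.W0, ev_zero]

/-- The matrix `E_{1,q}`. -/
theorem Degen.one_q (H : Degen k L M W) (a b q : ℕ) (hq : 2 ≤ q) (hqk : q ≤ k) (hk : 0 < k)
    (hr : ∀ r, 1 ≤ r → q + r ≤ k → L q + M r ≠ M (q + r)) :
    shiftM k (q - 1) (fun n => if n = q then 1 else 0) ∈
      lieStab a b (fun j : Fin k => W (j + 1)) ⟨0, hk⟩ := by
  refine shift_mem a b (by omega) _ (fun n => if n = q ∧ L q = M q then 1 else 0) W H.W0 hk ?_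
  have he := fun n h1 h2 => derA_shift (k := k) (t := q - 1) (by omega)
    (fun n => if n = q then 1 else 0) n h1 h2
  intro n
  induction n using Nat.strong_induction_on with
  | _ n ih =>
    intro h1 hn
    rw [H.der _ n h1 hn]
    rw [Finset.sum_eq_zero, Finset.sum_eq_zero, he n h1 hn]
    · by_cases h : n = q
      · subst h
        have : n - (n - 1) = 1 := by omega
        rw [this, H.W1 (by omega)]
        by_cases h' : L n = M n <;> simp [h']
      · simp [h]
    · intro p hp
      rw [Finset.HasAntidiagonal.mem_antidiagonal] at hp
      split_ifs with h
      · rcases Nat.eq_zero_or_pos p.1 with h0 | h0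
        · simp [h0, ev_zero]
        rcases Nat.eq_zero_or_pos p.2 with h0' | h0'
        · simp [h0', H.W0]
        · rw [ih _ (by omega) (by omega) (by omega), if_neg, zero_smul, mul_zero]
          rintro ⟨h3, h4⟩
          refine hr p.1 h0 (by omega) ?_
          have h5 := H.cond hp h0 hn h
          rw [h4, ← h5, ← h3, add_comm p.2, hp, add_comm, h]
      · rfl
    · intro p hp
      rw [Finset.HasAntidiagonal.mem_antidiagonal] at hp
      split_ifs with h
      · rcases Nat.eq_zero_or_pos p.1 with h0 | h0
        · simp [h0, ev_zero]
        rcases Nat.eq_zero_or_pos p.2 with h0' | h0'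
        · simp [h0', H.W0]
        · rw [he _ h0 (by omega), if_neg, zero_smul, zero_mul]
          rintro h3
          refine hr p.2 h0' (by omega) ?_
          rw [← h3, hp, h]
      · rfl

end part4

section part5

variable {k : ℕ} {L M : ℕ → ℝ} {W : ℕ → MvPolynomial (Fin k) ℂ}

theorem Degen.W2 (H : Degen k L M W) (hk : 2 ≤ k) (h2 : L 2 = M 2) (h : L 1 + M 1 ≠ M 2) :
    W 2 = ev ℂ k 2 := by
  rw [H.recW 2 (by omega) hk]
  simp [Finset.Nat.antidiagonal_succ, H.W0, ev_zero, h2, h]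

theorem Degen.two_term (H : Degen k L M W) (a b : ℕ) (hk : 4 ≤ k)
    (hLM : ∀ n, 1 ≤ n → n < k → L n = M n) (h2 : M 2 ≠ L 1 + M 1)
    (hB : L (k - 1) + M 1 = M k) (hC : L (k - 2) + M 2 = M k) (hk0 : 0 < k) :
    shiftM k (k - 3) (fun n => if n = k - 2 then 1 else if n = k - 1 then -1 else 0) ∈
      lieStab a b (fun j : Fin k => W (j + 1)) ⟨0, hk0⟩ := by
  set c : ℕ → ℂ := fun n => if n = k - 2 then 1 else if n = k - 1 then -1 else 0 with hc
  have c1 : c (k - 2) = 1 := by simp [hc]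
  have c2 : c (k - 1) = -1 := by
    have : k - 1 ≠ k - 2 := by omega
    simp [hc, this]
  have c3 : ∀ n, n ≠ k - 2 → n ≠ k - 1 → c n = 0 := by
    intro n h1 h2; simp [hc, h1, h2]
  have hE : L (k - 2) + M 1 ≠ M (k - 1) := by
    intro h
    apply h2
    have e1 := hLM (k - 1) (by omega) (by omega)
    have e2 := H.M1
    linarith
  have hE' : L 1 + M (k - 2) ≠ M (k - 1) := by
    have e1 := hLM (k - 2) (by omega) (by omega)
    have e2 := H.M1
    intro h
    apply hE
    linarith
  have W1 := H.W1 (by omega)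
  have W2 := H.W2 (by omega) (hLM 2 (by omega) (by omega)) (Ne.symm h2)
  refine shift_mem a b (by omega) c c W H.W0 hk0 ?_
  have he := fun n h1 h2 => derA_shift (k := k) (t := k - 3) (by omega) c n h1 h2
  intro n
  induction n using Nat.strong_induction_on with
  | _ n ih =>
    intro h1 hn
    rw [H.der _ n h1 hn, he n h1 hn]
    rcases Nat.lt_or_ge n k with hlt | hge
    · rw [if_pos (hLM n h1 hlt)]
      rw [Finset.sum_eq_zero, Finset.sum_eq_zero]
      · by_cases h3 : n = k - 2
        · have : n - (k - 3) = 1 := by omega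
          rw [this, W1]; simp
        by_cases h4 : n = k - 1
        · have : n - (k - 3) = 2 := by omega
          rw [this, W2]; simp
        · simp [c3 n h3 h4]
      · intro p hp
        rw [Finset.HasAntidiagonal.mem_antidiagonal] at hp
        split_ifs with h
        · rcases Nat.eq_zero_or_pos p.1 with h0 | h0
          · simp [h0, ev_zero]
          rcases Nat.eq_zero_or_pos p.2 with h0' | h0'
          · simp [h0', H.W0]
          rw [ih _ (by omega) h0' (by omega), c3, zero_smul, mul_zero]
          · rintro h3
            have h4 : p.1 = 1 := by omega
            have h5 : n = k - 1 := by omega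
            rw [h3, h4, h5] at h
            exact hE' h
          · omega
        · rfl
      · intro p hp
        rw [Finset.HasAntidiagonal.mem_antidiagonal] at hp
        split_ifs with h
        · rcases Nat.eq_zero_or_pos p.1 with h0 | h0
          · simp [h0, ev_zero]
          rcases Nat.eq_zero_or_pos p.2 with h0' | h0'
          · simp [h0', H.W0]
          rw [he _ h0 (by omega), c3, zero_smul, zero_mul]
          · rintro h3
            have h4 : p.2 = 1 := by omega
            have h5 : n = k - 1 := by omega
            rw [h3, h4, h5] at h
            exact hE h
          · omega
        · rfl
    · have hnk : n = k := by omega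
      have hck : c n = 0 := c3 n (by omega) (by omega)
      have s1 : k - 1 - (k - 3) = 2 := by omega
      have s2 : k - 2 - (k - 3) = 1 := by omega
      rw [hck, Finset.sum_eq_add_of_mem (k - 1, 1) (k - 2, 2),
        Finset.sum_eq_add_of_mem (1, k - 1) (2, k - 2)]
      · have hB' : L 1 + M (k - 1) = M k := by
          have e1 := hLM (k - 1) (by omega) (by omega)
          have e2 := H.M1
          linarith
        have hC' : L 2 + M (k - 2) = M k := by
          have e1 := hLM (k - 2) (by omega) (by omega)
          have e2 := hLM 2 (by omega) (by omega)
          linarith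
        rw [hnk]
        simp only [hB, hC, hB', hC', if_true]
        rw [ih _ (by omega) (by omega) (by omega), ih _ (by omega) (by omega) (by omega),
          he _ (by omega) (by omega), he _ (by omega) (by omega), c1, c2, s1, s2, W1, W2]
        simp only [zero_smul, ite_self, one_smul, neg_smul]
        ring
      · rw [Finset.HasAntidiagonal.mem_antidiagonal]; simp; omega
      · rw [Finset.HasAntidiagonal.mem_antidiagonal]; simp; omega
      · simp
      · intro p hp hne
        rw [Finset.HasAntidiagonal.mem_antidiagonal] at hp
        split_ifs with h
        · rcases Nat.eq_zero_or_pos p.1 with h0 | h0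
          · simp [h0, ev_zero]
          rcases Nat.eq_zero_or_pos p.2 with h0' | h0'
          · simp [h0', H.W0]
          rw [ih _ (by omega) h0' (by omega), c3, zero_smul, mul_zero]
          · rintro h3
            apply hne.2
            ext <;> simp <;> omega
          · rintro h3
            apply hne.1
            ext <;> simp <;> omega
        · rfl
      · rw [Finset.HasAntidiagonal.mem_antidiagonal]; simp; omega
      · rw [Finset.HasAntidiagonal.mem_antidiagonal]; simp; omega
      · simp
      · intro p hp hne
        rw [Finset.HasAntidiagonal.mem_antidiagonal] at hp
        split_ifs with h
        · rcases Nat.eq_zero_or_pos p.1 with h0 | h0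
          · simp [h0, ev_zero]
          rcases Nat.eq_zero_or_pos p.2 with h0' | h0'
          · simp [h0', H.W0]
          rw [he _ h0 (by omega), c3, zero_smul, zero_mul]
          · rintro h3
            apply hne.2
            ext <;> simp <;> omega
          · rintro h3
            apply hne.1
            ext <;> simp <;> omega
        · rfl

theorem scalar_id (g : ℕ → ℝ) (k : ℕ) (hsup : ∀ i l, g i + g l ≤ g (i + l)) (g1 : g 1 = 0)
    (c mu : ℕ → ℝ) (hmu : ∀ n, mu n = g (k - 1) * n - ((k - 1 : ℕ) : ℝ) * g n)
    (hc : ∀ n, c (n + 1) = if n + 1 < k ∧ g (n + 1) = g n then mu n else 0)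
    (i l : ℕ) (hil : i + l + 1 ≤ k) (hi : 1 ≤ i) (hl : 1 ≤ l) :
    (if g (i + 1) + g l = g (i + l + 1) then c (i + 1) else 0) +
      (if g i + g (l + 1) = g (i + l + 1) then c (l + 1) else 0) =
      (if g i + g l = g (i + l) then c (i + l + 1) else 0) := by
  have m : ∀ n, g n ≤ g (n + 1) := by
    intro n
    have := hsup n 1
    linarith
  have a1 := hsup i l
  have a2 := hsup (i + 1) l
  have a3 := hsup i (l + 1)
  have a4 := m i
  have a5 := m l
  have a6 := m (i + l)
  rw [show i + 1 + l = i + l + 1 by ring] at a2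
  rw [show i + (l + 1) = i + l + 1 by ring] at a3
  have hi' : i + 1 < k := by omega
  have hl' : l + 1 < k := by omega
  rw [hc, hc, hc]
  simp only [hi', hl', true_and]
  by_cases Q : g i + g l = g (i + l + 1)
  · have b1 : g (i + l + 1) = g (i + l) := by linarith
    have b2 : g (i + 1) = g i := by linarith
    have b3 : g (l + 1) = g l := by linarith
    have b4 : g i + g l = g (i + l) := by linarith
    simp only [b1, b2, b3, b4, if_true, and_true]
    split_ifs with h
    · rw [hmu, hmu, hmu, ← b4]; push_cast; ring
    · have hk : i + l = k - 1 := by omega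
      rw [hmu, hmu, ← hk, ← b4]; push_cast; ring
  · have z1 : (if g (i + 1) + g l = g (i + l + 1) then if g (i + 1) = g i then mu i else 0 else 0) = 0 := by
      split_ifs with h h'
      · exact absurd (by rw [← h', h]) Q
      · rfl
      · rfl
    have z2 : (if g i + g (l + 1) = g (i + l + 1) then if g (l + 1) = g l then mu l else 0 else 0) = 0 := by
      split_ifs with h h'
      · exact absurd (by rw [← h', h]) Q
      · rfl
      · rfl
    have z3 : (if g i + g l = g (i + l) then
        if i + l + 1 < k ∧ g (i + l + 1) = g (i + l) then mu (i + l) else 0 else 0) = 0 := by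
      split_ifs with h h'
      · exact absurd (by rw [h'.2, h]) Q
      · rfl
      · rfl
    rw [z1, z2, z3, add_zero]

theorem Degen.long (H : Degen k L M W) (a b : ℕ) (hk : 4 ≤ k)
    (hLM : ∀ n, 1 ≤ n → n < k → L n = M n) (hk0 : 0 < k)
    (g : ℕ → ℝ) (hg : ∀ n, g n = n * M 1 - M n) (c mu : ℕ → ℝ)
    (hmu : ∀ n, mu n = g (k - 1) * n - ((k - 1 : ℕ) : ℝ) * g n)
    (hc : ∀ n, c (n + 1) = if n + 1 < k ∧ g (n + 1) = g n then mu n else 0) :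
    shiftM k 1 (fun n => (c n : ℂ)) ∈
      lieStab a b (fun j : Fin k => W (j + 1)) ⟨0, hk0⟩ := by
  have hsup : ∀ i l, g i + g l ≤ g (i + l) := by
    intro i l
    have := H.sub i l
    rw [hg, hg, hg]; push_cast; linarith
  have g1 : g 1 = 0 := by rw [hg]; simp
  have key := scalar_id g k hsup g1 c mu hmu hc
  refine shift_mem a b le_rfl _ (fun n => (c n : ℂ)) W H.W0 hk0 ?_
  have he := fun n h1 h2 => derA_shift (k := k) (t := 1) le_rfl (fun n => (c n : ℂ)) n h1 h2
  set D := derA (shiftM k 1 (fun n => (c n : ℂ))) with hD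
  intro n
  induction n using Nat.strong_induction_on with
  | _ n ih =>
    intro h1 hn
    obtain ⟨N, rfl⟩ : ∃ N, n = N + 1 := ⟨n - 1, by omega⟩
    rw [H.der _ _ h1 hn, he _ h1 hn, Nat.add_sub_cancel]
    have hfirst : (if L (N + 1) = M (N + 1) then (c (N + 1) : ℂ) • ev ℂ k N else 0) =
        (c (N + 1) : ℂ) • ev ℂ k N := by
      split_ifs with h
      · rfl
      · have : N + 1 = k := by
          by_contra h'
          exact h (hLM _ h1 (by omega))
        rw [hc, if_neg (by omega)]; simp
    rw [hfirst, Finset.Nat.sum_antidiagonal_succ, Finset.Nat.sum_antidiagonal_succ']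
    simp only [ev_zero, H.W0, map_zero, zero_mul, mul_zero, ite_self, zero_add]
    rcases Nat.eq_zero_or_pos N with rfl | hN
    · simp [ev_zero, H.W0]
    conv_rhs => rw [H.recW N hN (by omega), if_pos (hLM N hN (by omega)), smul_add]
    rw [← Finset.sum_add_distrib, Finset.smul_sum]
    congr 1
    refine Finset.sum_congr rfl fun p hp => ?_
    rw [Finset.HasAntidiagonal.mem_antidiagonal] at hp
    rcases Nat.eq_zero_or_pos p.1 with h0 | h0
    · simp [h0, ev_zero, he 1 le_rfl (by omega)]
    rcases Nat.eq_zero_or_pos p.2 with h0' | h0'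
    · have := ih 1 (by omega) le_rfl (by omega)
      simp [h0', H.W0, this]
    rw [he _ (by omega) (by omega), ih _ (by omega) (by omega) (by omega),
      hLM p.1 (by omega) (by omega), hLM (p.1 + 1) (by omega) (by omega), Nat.add_sub_cancel,
      Nat.add_sub_cancel]
    have k1 := key p.1 p.2 (by omega) h0 h0'
    have q1 : (M (p.1 + 1) + M p.2 = M (N + 1)) ↔ g (p.1 + 1) + g p.2 = g (p.1 + p.2 + 1) := by
      rw [hg, hg, hg, hp, ← hp]; push_cast
      constructor <;> intro h <;> linarith
    have q2 : (M p.1 + M (p.2 + 1) = M (N + 1)) ↔ g p.1 + g (p.2 + 1) = g (p.1 + p.2 + 1) := by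
      rw [hg, hg, hg, hp, ← hp]; push_cast
      constructor <;> intro h <;> linarith
    have q3 : (M p.1 + M p.2 = M N) ↔ g p.1 + g p.2 = g (p.1 + p.2) := by
      rw [hg, hg, hg, hp, ← hp]; push_cast
      constructor <;> intro h <;> linarith
    simp only [q1, q2, q3]
    have k2 := congrArg (fun x : ℝ => (x : ℂ) • (ev ℂ k p.1 * W p.2)) k1
    rw [← hp]
    simp only [Complex.ofReal_add, add_smul] at k2
    convert k2 using 1
    · congr 1
      · split_ifs <;> simp
      · split_ifs <;> simp
    · split_ifs <;> simp

end part5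

section part6

variable {k : ℕ} {L M : ℕ → ℝ} {W : ℕ → MvPolynomial (Fin k) ℂ}

theorem Degen.finrank_of (H : Degen k L M W) (a b : ℕ) (hk0 : 0 < k) (j : Fin k)
    (hj : L (j + 1) ≠ M (j + 1)) (X : Matrix (Fin k) (Fin k) ℂ)
    (hX : X ∈ lieStab a b (fun j : Fin k => W (j + 1)) ⟨0, hk0⟩)
    (p q : Fin k) (hpq : p ≠ q) (hqj : q ≠ j) (hXpq : X p q ≠ 0)
    (hsum : ∑ i : Fin k, L (i + 1) = 0) (hne : ∃ i : Fin k, L (i + 1) ≠ 0)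
    (hab : a * ∑ i : Fin k, M (i + 1) + b * L 1 = 0) :
    k + 1 ≤ Module.finrank ℂ (lieStab a b (fun j : Fin k => W (j + 1)) ⟨0, hk0⟩) := by
  classical
  have hj0 : j ≠ ⟨0, hk0⟩ := by
    rintro rfl
    exact hj H.M1.symm
  set D : Matrix (Fin k) (Fin k) ℂ := Matrix.diagonal fun i : Fin k => (L (i + 1) : ℂ) with hD
  have hDm : D ∈ lieStab a b (fun j : Fin k => W (j + 1)) ⟨0, hk0⟩ := by
    refine ⟨?_, Matrix.diagonal fun i : Fin k => (M (i + 1) : ℂ), (L 1 : ℂ), ?_, ?_, ?_⟩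
    · rw [hD, Matrix.trace_diagonal]
      exact_mod_cast hsum
    · intro i
      rw [H.diag_eig D hD _ (by omega), Finset.sum_eq_single i]
      · simp
      · intro l _ hl
        simp [hl]
      · simp
    · intro i
      rw [hD, Matrix.diagonal_apply]
      split_ifs with h
      · rw [h]
      · rfl
    · rw [Matrix.trace_diagonal]
      exact_mod_cast hab
  obtain ⟨col, hcol⟩ : ∃ col : (Fin k → ℂ) → Matrix (Fin k) (Fin k) ℂ, ∀ c r s,
      col c r s = if s = j then (if r = j then 0 else c r) else 0 :=
    ⟨fun c => Matrix.of fun r s => if s = j then (if r = j then 0 else c r) else 0,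
      fun c r s => rfl⟩
  have hcolm : ∀ c, col c ∈ lieStab a b (fun j : Fin k => W (j + 1)) ⟨0, hk0⟩ := by
    intro c
    refine ⟨?_, 0, 0, ?_, ?_, by simp⟩
    · refine Finset.sum_eq_zero fun i _ => ?_
      simp only [Matrix.diag_apply, hcol]
      split_ifs <;> rfl
    · intro i
      rw [H.kill (col c) (j + 1) hj _ _ (by omega)]
      · simp
      · intro r s hs
        have : s ≠ j := by rintro rfl; exact hs rfl
        simp [hcol, this]
    · intro i
      simp [hcol, hj0.symm]
  let Ψ : ((Fin k → ℂ) × ℂ) →ₗ[ℂ] lieStab a b (fun j : Fin k => W (j + 1)) ⟨0, hk0⟩ :=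
    { toFun := fun c => ⟨col c.1 + c.1 j • D + c.2 • X,
        Submodule.add_mem _ (Submodule.add_mem _ (hcolm _) (Submodule.smul_mem _ _ hDm))
          (Submodule.smul_mem _ _ hX)⟩
      map_add' := by
        intro c c'
        apply Subtype.ext
        ext r s
        simp only [Submodule.coe_add, Matrix.add_apply, Matrix.smul_apply, smul_eq_mul,
          Prod.fst_add, Prod.snd_add, Pi.add_apply, hcol]
        split_ifs <;> ring
      map_smul' := by
        intro z c
        apply Subtype.ext
        ext r s
        simp only [Submodule.coe_smul, Matrix.add_apply, Matrix.smul_apply, smul_eq_mul,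
          Prod.smul_fst, Prod.smul_snd, Pi.smul_apply, hcol, RingHom.id_apply]
        split_ifs <;> ring }
  have hinj : Function.Injective Ψ := by
    rw [← LinearMap.ker_eq_bot, LinearMap.ker_eq_bot']
    rintro ⟨c, z⟩ h
    have h1 : ∀ r s, col c r s + c j * D r s + z * X r s = 0 := by
      intro r s
      have := congrArg (fun A => A.1 r s) h
      simpa [Ψ] using this
    have hz : z = 0 := by
      have := h1 p q
      simp [hcol, hqj, hD, hpq] at this
      exact this.resolve_right hXpq
    subst hz
    have hc : ∀ r, r ≠ j → c r = 0 := by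
      intro r hr
      have := h1 r j
      simpa [hcol, hD, hr] using this
    have hcj : c j = 0 := by
      obtain ⟨i, hi⟩ := hne
      have := h1 i i
      have h3 : col c i i = 0 := by
        simp only [hcol]; split_ifs <;> rfl
      rw [h3] at this
      simp [hD] at this
      exact this.resolve_right hi
    have : c = 0 := by
      funext r
      by_cases hr : r = j
      · rw [hr, hcj]; rfl
      · exact hc r hr
    rw [this]; rfl
  have := LinearMap.finrank_le_finrank_of_injective hinj
  simpa using this

theorem Degen.finrank_ge (H : Degen k L M W) (a b : ℕ) (ha : 0 < a) (hb : 0 < b) (hk : 4 ≤ k)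
    (hk0 : 0 < k)
    (hsum : ∑ i : Fin k, L (i + 1) = 0) (hne : ∃ i : Fin k, L (i + 1) ≠ 0)
    (hab : a * ∑ i : Fin k, M (i + 1) + b * L 1 = 0) :
    k + 1 ≤ Module.finrank ℂ (lieStab a b (fun j : Fin k => W (j + 1)) ⟨0, hk0⟩) := by
  have ha' : (0 : ℝ) < a := by exact_mod_cast ha
  have hb' : (0 : ℝ) < b := by exact_mod_cast hb
  have hMn : ∀ n : ℕ, M n ≤ n * M 1 := by
    intro n
    induction n with
    | zero => simp [H.M0]
    | succ n ih =>
      have := H.sub n 1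
      push_cast; linarith
  by_cases hall : ∃ j, 1 ≤ j ∧ j < k ∧ L j ≠ M j
  · obtain ⟨j, h1, h2, h3⟩ := hall
    have hj : (⟨j - 1, by omega⟩ : Fin k).val + 1 = j := by simp; omega
    refine H.finrank_of a b hk0 ⟨j - 1, by omega⟩ (by rw [hj]; exact h3) _
      (H.one_q a b k (by omega) le_rfl hk0 (by intro r _ _; omega))
      ⟨0, hk0⟩ ⟨k - 1, by omega⟩ ?_ ?_ ?_ hsum hne hab
    · rw [Ne, Fin.ext_iff]; simp; omega
    · rw [Ne, Fin.ext_iff]; simp; omega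
    · have e1 : 0 + 1 + (k - 1) = k - 1 + 1 := by omega
      have e2 : k - 1 + 1 = k := by omega
      simp only [shiftM]
      rw [if_pos e1, if_pos e2]; simp
  have hLM : ∀ n, 1 ≤ n → n < k → L n = M n := by
    intro n h1 h2
    by_contra h
    exact hall ⟨n, h1, h2, h⟩
  -- sums over all indices but the last
  have hlast : ∀ f : ℕ → ℝ, ∑ i : Fin k, f (i + 1) = ∑ i ∈ Finset.range (k - 1), f (i + 1) + f k := by
    intro f
    rw [Fin.sum_univ_eq_sum_range (fun i => f (i + 1)) k]
    obtain ⟨K, rfl⟩ : ∃ K, k = K + 1 := ⟨k - 1, by omega⟩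
    rw [Finset.sum_range_succ]; rfl
  have hLsum : ∑ i ∈ Finset.range (k - 1), L (i + 1) = ∑ i ∈ Finset.range (k - 1), M (i + 1) := by
    refine Finset.sum_congr rfl fun i hi => ?_
    rw [Finset.mem_range] at hi
    exact hLM _ (by omega) (by omega)
  -- if the minimal weights are linear we get a contradiction
  have hlin : ¬ (∀ n, n ≤ k → M n = n * M 1) := by
    intro hl
    have e1 : ∑ i : Fin k, M (i + 1) = (∑ i : Fin k, ((i : ℝ) + 1)) * M 1 := by
      rw [Finset.sum_mul]
      refine Finset.sum_congr rfl fun i _ => ?_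
      rw [hl _ (by omega)]; push_cast; ring
    have e2 : 0 ≤ ∑ i : Fin k, ((i : ℝ) + 1) := by positivity
    rw [e1, ← H.M1] at hab
    have e3 : M 1 = 0 := by
      have : (a * (∑ i : Fin k, ((i : ℝ) + 1)) + b) * M 1 = 0 := by linarith
      rcases mul_eq_zero.1 this with h | h
      · have : 0 ≤ a * ∑ i : Fin k, ((i : ℝ) + 1) := by positivity
        linarith
      · exact h
    have e4 : ∀ n, n ≤ k → M n = 0 := by
      intro n hn; rw [hl n hn, e3, mul_zero]
    have e5 : ∀ n, 1 ≤ n → n < k → L n = 0 := by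
      intro n h1 h2; rw [hLM n h1 h2, e4 n h2.le]
    have e6 : L k = 0 := by
      rw [hlast] at hsum
      rw [Finset.sum_eq_zero] at hsum
      · linarith
      · intro i hi
        rw [Finset.mem_range] at hi
        exact e5 _ (by omega) (by omega)
    obtain ⟨i, hi⟩ := hne
    apply hi
    rcases Nat.lt_or_ge (i + 1) k with h | h
    · exact e5 _ (by omega) h
    · have : i.val + 1 = k := by omega
      rw [this, e6]
  have hLk : L k ≠ M k := by
    intro h
    have e1 : ∑ i : Fin k, M (i + 1) = 0 := by
      rw [hlast, ← hLsum, ← h, ← hlast, hsum]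
    rw [e1, mul_zero, zero_add] at hab
    have e2 : M 1 = 0 := by
      rw [H.M1]
      exact (mul_eq_zero.1 hab).resolve_left hb'.ne'
    have e3 : ∀ n, M n ≤ 0 := by
      intro n; have := hMn n; rw [e2, mul_zero] at this; exact this
    have e4 := (Finset.sum_eq_zero_iff_of_nonpos (fun (i : Fin k) _ => e3 (i + 1))).1 e1
    apply hlin
    intro n hn
    rw [e2, mul_zero]
    rcases Nat.eq_zero_or_pos n with rfl | hn0
    · exact H.M0
    · have := e4 ⟨n - 1, by omega⟩ (Finset.mem_univ _)
      simp only [Nat.sub_add_cancel hn0] at this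
      exact this
  have hkk : (⟨k - 1, by omega⟩ : Fin k).val + 1 = k := by simp; omega
  have fin := fun X hX p q hpq (hqj : q ≠ (⟨k - 1, by omega⟩ : Fin k)) hXpq =>
    H.finrank_of a b hk0 ⟨k - 1, by omega⟩
    (by rw [hkk]; exact hLk) X hX p q hpq hqj hXpq hsum hne hab
  by_cases hA : L (k - 1) + M 1 = M k
  swap
  · refine fin _ (H.one_q a b (k - 1) (by omega) (by omega) hk0 ?_)
      ⟨0, hk0⟩ ⟨k - 2, by omega⟩ ?_ ?_ ?_
    · intro r h1 h2
      have : r = 1 := by omega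
      subst this
      rwa [show k - 1 + 1 = k by omega]
    · rw [Ne, Fin.ext_iff]; simp; omega
    · rw [Ne, Fin.ext_iff]; simp; omega
    · have e1 : 0 + 1 + (k - 1 - 1) = k - 2 + 1 := by omega
      have e2 : k - 2 + 1 = k - 1 := by omega
      simp only [shiftM]
      rw [if_pos e1, if_pos e2]; simp
  by_cases h2 : M 2 = L 1 + M 1
  · -- the long nilpotent field
    have hgk : 0 < ((k - 1 : ℕ) : ℝ) * M 1 - M (k - 1) := by
      have h0 := hMn (k - 1)
      rcases h0.lt_or_eq with h | h
      · linarith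
      · exfalso
        apply hlin
        have hmono : ∀ n, n ≤ k - 1 → M n = n * M 1 := by
          intro n hn
          have s1 := H.sub n (k - 1 - n)
          rw [show n + (k - 1 - n) = k - 1 by omega, h] at s1
          have s2 := hMn n
          have s3 := hMn (k - 1 - n)
          have s4 : ((k - 1 : ℕ) : ℝ) = n + ((k - 1 - n : ℕ) : ℝ) := by
            rw [← Nat.cast_add]; congr 1; omega
          rw [s4] at s1
          linarith
        intro n hn
        rcases Nat.lt_or_ge n k with hlt | hge
        · exact hmono n (by omega)
        · have hnk : n = k := by omega
          rw [hnk, ← hA, hLM _ (by omega) (by omega), hmono _ le_rfl]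
          have s4 : ((k - 1 : ℕ) : ℝ) + 1 = k := by
            exact_mod_cast (by omega : k - 1 + 1 = k)
          rw [← s4]; ring
    set g : ℕ → ℝ := fun n => n * M 1 - M n with hg
    set mu : ℕ → ℝ := fun n => g (k - 1) * n - ((k - 1 : ℕ) : ℝ) * g n with hmu
    set c : ℕ → ℝ := fun n => if n < k ∧ g n = g (n - 1) then mu (n - 1) else 0 with hc
    refine fin _ (H.long a b hk hLM hk0 g (fun n => rfl) c mu (fun n => rfl) (fun n => rfl))
      ⟨0, hk0⟩ ⟨1, by omega⟩ ?_ ?_ ?_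
    · rw [Ne, Fin.ext_iff]; simp
    · rw [Ne, Fin.ext_iff]; simp; omega
    · have hg1 : g 1 = 0 := by simp [hg]
      have hg2 : g 2 = 0 := by
        simp only [hg]
        rw [h2, H.M1]; push_cast; ring
      have : c 2 = g (k - 1) := by
        simp only [hc]
        rw [if_pos ⟨by omega, by simp [hg1, hg2]⟩]
        simp [hmu, hg1]
      simp only [shiftM]
      rw [if_pos trivial]
      simp only [Nat.reduceAdd]
      rw [this]
      exact_mod_cast hgk.ne'
  by_cases hC : L (k - 2) + M 2 = M k
  · refine fin _ (H.two_term a b hk hLM h2 hA hC hk0) ⟨0, hk0⟩ ⟨k - 3, by omega⟩ ?_ ?_ ?_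
    · rw [Ne, Fin.ext_iff]; simp; omega
    · rw [Ne, Fin.ext_iff]; simp; omega
    · have e1 : 0 + 1 + (k - 3) = k - 3 + 1 := by omega
      have e2 : k - 3 + 1 = k - 2 := by omega
      simp only [shiftM]
      rw [if_pos e1, if_pos e2]; simp
  · refine fin _ (H.one_q a b (k - 2) (by omega) (by omega) hk0 ?_)
      ⟨0, hk0⟩ ⟨k - 3, by omega⟩ ?_ ?_ ?_
    · intro r h1 h2'
      have : r = 1 ∨ r = 2 := by omega
      rcases this with rfl | rfl
      · rw [show k - 2 + 1 = k - 1 by omega]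
        intro h
        have s1 := H.sub (k - 2) 2
        rw [show k - 2 + 2 = k by omega, ← hLM (k - 2) (by omega) (by omega)] at s1
        have s2 := H.sub 1 1
        have s3 := hLM (k - 1) (by omega) (by omega)
        have s4 := H.M1
        rw [show 1 + 1 = 2 from rfl] at s2
        apply h2
        linarith
      · rwa [show k - 2 + 2 = k by omega]
    · rw [Ne, Fin.ext_iff]; simp; omega
    · rw [Ne, Fin.ext_iff]; simp; omega
    · have e1 : 0 + 1 + (k - 2 - 1) = k - 3 + 1 := by omega
      have e2 : k - 3 + 1 = k - 2 := by omega
      simp only [shiftM]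
      rw [if_pos e1, if_pos e2]; simp

end part6

section part7

/-- The polynomial `∑_{i₁+⋯+i_s = n} e_{i₁}⋯e_{i_s}`. -/
noncomputable def Vp (R : Type) [CommSemiring R] (k n : ℕ) : MvPolynomial (Fin k) R :=
  ∑ l : Fin k, ∑ a : Fin (l.val + 1) → Fin k,
    if (∑ t, ((a t).val + 1)) = n then ∏ t, MvPolynomial.X (a t) else 0

theorem colPoly_one {k : ℕ} (j : Fin k) :
    colPoly (1 : Matrix (Fin k) (Fin k) ℂ) j = Vp ℂ k (j + 1) := by
  unfold colPoly Vp
  refine Finset.sum_congr rfl fun l _ => Finset.sum_congr rfl fun a _ => ?_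
  congr 1
  refine Finset.prod_congr rfl fun t _ => ?_
  rw [Finset.sum_eq_single (a t)]
  · simp
  · intro i _ hi
    simp [hi]
  · simp

theorem map_Vp (k n : ℕ) :
    MvPolynomial.map (Nat.castRingHom ℂ) (Vp ℕ k n) = Vp ℂ k n := by
  unfold Vp
  simp only [map_sum, apply_ite (MvPolynomial.map (Nat.castRingHom ℂ)), map_prod,
    MvPolynomial.map_X, map_zero]

/-- generating polynomial of the variables -/
noncomputable def Egen (k : ℕ) : Polynomial (MvPolynomial (Fin k) ℕ) :=
  ∑ i : Fin k, Polynomial.C (MvPolynomial.X i) * Polynomial.X ^ (i.val + 1)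

theorem Egen_coeff (k n : ℕ) : (Egen k).coeff n = ev ℕ k n := by
  unfold Egen
  simp only [Polynomial.finsetSum_coeff, Polynomial.coeff_C_mul, Polynomial.coeff_X_pow]
  by_cases h : 1 ≤ n ∧ n ≤ k
  · obtain ⟨m, rfl⟩ : ∃ m, n = m + 1 := ⟨n - 1, by omega⟩
    have h2 := ev_succ ℕ (⟨m, h.2⟩ : Fin k)
    simp only at h2
    rw [h2, Finset.sum_eq_single (⟨m, h.2⟩ : Fin k)]
    · simp
    · intro i _ hi
      rw [if_neg, mul_zero]
      intro h'
      apply hi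
      ext
      simp
      omega
    · simp
  · rw [Finset.sum_eq_zero]
    · simp [ev, h]
    · intro i _
      rw [if_neg, mul_zero]
      omega

theorem Vp_eq_coeff (k n : ℕ) :
    Vp ℕ k n = (∑ l ∈ Finset.range k, Egen k ^ (l + 1)).coeff n := by
  rw [← Fin.sum_univ_eq_sum_range (fun l => Egen k ^ (l + 1)) k, Polynomial.finsetSum_coeff]
  unfold Vp
  refine Finset.sum_congr rfl fun l _ => ?_
  unfold Egen
  rw [Fintype.sum_pow, Polynomial.finsetSum_coeff]
  refine Finset.sum_congr rfl fun a _ => ?_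
  rw [Finset.prod_mul_distrib, Finset.prod_pow_eq_pow_sum, ← map_prod, Polynomial.coeff_C_mul,
    Polynomial.coeff_X_pow]
  by_cases h : ∑ t, ((a t).val + 1) = n
  · rw [if_pos h, if_pos h.symm, mul_one]
  · rw [if_neg h, if_neg (Ne.symm h), mul_zero]

theorem Egen_pow_coeff (k n : ℕ) (hn : n ≤ k) : (Egen k ^ (k + 1)).coeff n = 0 := by
  have : Egen k = Polynomial.X *
      ∑ i : Fin k, Polynomial.C (MvPolynomial.X i) * Polynomial.X ^ i.val := by
    unfold Egen
    rw [Finset.mul_sum]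
    refine Finset.sum_congr rfl fun i _ => ?_
    ring
  rw [this, mul_pow, Polynomial.coeff_X_pow_mul']
  rw [if_neg (by omega)]

theorem Vp_rec (k n : ℕ) (hn : n ≤ k) :
    Vp ℕ k n = ev ℕ k n +
      ∑ p ∈ Finset.HasAntidiagonal.antidiagonal n, ev ℕ k p.1 * Vp ℕ k p.2 := by
  have h : ∑ l ∈ Finset.range k, Egen k ^ (l + 1) + Egen k ^ (k + 1) =
      Egen k + Egen k * ∑ l ∈ Finset.range k, Egen k ^ (l + 1) := by
    rw [← Finset.sum_range_succ, Finset.sum_range_succ', Finset.mul_sum, add_comm]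
    congr 1
    · simp
    · refine Finset.sum_congr rfl fun i _ => ?_
      ring
  have h2 := congrArg (fun p => Polynomial.coeff p n) h
  simp only [Polynomial.coeff_add, Egen_pow_coeff k n hn, add_zero, Polynomial.coeff_mul,
    Egen_coeff, ← Vp_eq_coeff] at h2
  exact h2

theorem Vp_zero (k : ℕ) : Vp ℕ k 0 = 0 := by
  unfold Vp
  refine Finset.sum_eq_zero fun l _ => Finset.sum_eq_zero fun a _ => ?_
  rw [if_neg]
  rw [Fin.sum_univ_succ]
  omega

/-- the weight of a monomial -/
def wt {k : ℕ} (m : Fin k →₀ ℕ) : ℕ := ∑ i, m i * (i.val + 1)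

theorem wt_add {k : ℕ} (m m' : Fin k →₀ ℕ) : wt (m + m') = wt m + wt m' := by
  simp [wt, add_mul, Finset.sum_add_distrib]

theorem wt_single {k : ℕ} (i : Fin k) (n : ℕ) : wt (Finsupp.single i n) = n * (i + 1) := by
  classical
  unfold wt
  rw [Finset.sum_eq_single i]
  · simp
  · intro j _ hj
    simp [hj.symm]
  · simp

theorem wt_eq_zero {k : ℕ} {m : Fin k →₀ ℕ} (h : wt m = 0) : m = 0 := by
  ext i
  have := (Finset.sum_eq_zero_iff.1 h) i (Finset.mem_univ _)
  simpa using this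

theorem sum_le_wt {k : ℕ} (m : Fin k →₀ ℕ) : ∑ i, m i ≤ wt m := by
  refine Finset.sum_le_sum fun i _ => ?_
  nlinarith [Nat.zero_le (m i), Nat.zero_le i.val]

theorem exists_sub {k : ℕ} {m : Fin k →₀ ℕ} {i : Fin k} (h : m i ≠ 0) :
    ∃ m', m = Finsupp.single i 1 + m' := by
  classical
  refine ⟨m - Finsupp.single i 1, ?_⟩
  ext j
  simp only [Finsupp.add_apply, Finsupp.tsub_apply, Finsupp.single_apply]
  split_ifs with h'
  · subst h'; omega
  · omega

theorem Vp_coeff_wt {k n : ℕ} (hn : n ≤ k) (m : Fin k →₀ ℕ)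
    (h : MvPolynomial.coeff m (Vp ℕ k n) ≠ 0) : wt m = n := by
  classical
  induction n using Nat.strong_induction_on generalizing m with
  | _ n ih =>
    by_contra hw
    apply h
    rw [Vp_rec k n hn, MvPolynomial.coeff_add, MvPolynomial.coeff_sum, Finset.sum_eq_zero, add_zero]
    · by_cases h1 : 1 ≤ n ∧ n ≤ k
      · rw [ev, dif_pos h1, MvPolynomial.coeff_X, if_neg]
        rintro rfl
        apply hw
        rw [wt_single]; simp; omega
      · rw [ev, dif_neg h1]; simp
    · intro p hp
      rw [Finset.HasAntidiagonal.mem_antidiagonal] at hp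
      by_cases h1 : 1 ≤ p.1 ∧ p.1 ≤ k
      · rw [ev, dif_pos h1]
        by_contra h2
        rw [MvPolynomial.coeff_X_mul'] at h2
        split_ifs at h2 with h3
        · obtain ⟨m', rfl⟩ := exists_sub (Finsupp.mem_support_iff.1 h3)
          rw [add_tsub_cancel_left] at h2
          have := ih p.2 (by omega) (by omega) _ h2
          apply hw
          rw [wt_add, wt_single, this]
          simp; omega
        · exact h2 rfl
      · rw [ev, dif_neg h1]; simp

theorem Vp_coeff_ne {k n : ℕ} (hn : n ≤ k) (h1 : 1 ≤ n) (m : Fin k →₀ ℕ) (hm : wt m = n) :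
    MvPolynomial.coeff m (Vp ℕ k n) ≠ 0 := by
  classical
  induction n using Nat.strong_induction_on generalizing m with
  | _ n ih =>
    have hm0 : m ≠ 0 := by
      rintro rfl
      simp [wt] at hm; omega
    obtain ⟨i, hi⟩ : ∃ i, m i ≠ 0 := by
      by_contra h
      push Not at h
      exact hm0 (Finsupp.ext h)
    obtain ⟨m', rfl⟩ := exists_sub hi
    rw [wt_add, wt_single, one_mul] at hm
    rw [Vp_rec k n hn, MvPolynomial.coeff_add, MvPolynomial.coeff_sum]
    rcases Nat.eq_zero_or_pos (wt m') with h0 | h0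
    · have := wt_eq_zero h0
      subst this
      have hn' : n = i + 1 := by omega
      rw [hn', ev_succ, add_zero, MvPolynomial.coeff_X, if_pos rfl]
      omega
    · have hlt := ih (wt m') (by omega) (by omega) h0 m' rfl
      have hmem : ((i : ℕ) + 1, wt m') ∈ Finset.HasAntidiagonal.antidiagonal n := by
        rw [Finset.HasAntidiagonal.mem_antidiagonal]; exact hm
      have hle := Finset.single_le_sum (f := fun p : ℕ × ℕ =>
        MvPolynomial.coeff (Finsupp.single i 1 + m') (ev ℕ k p.1 * Vp ℕ k p.2))
        (fun _ _ => Nat.zero_le _) hmem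
      simp only [ev_succ, MvPolynomial.coeff_X_mul] at hle
      omega

theorem VC_coeff {k n : ℕ} (hn : n ≤ k) (h1 : 1 ≤ n) (m : Fin k →₀ ℕ) :
    MvPolynomial.coeff m (Vp ℂ k n) ≠ 0 ↔ wt m = n := by
  rw [← map_Vp, MvPolynomial.coeff_map]
  constructor
  · intro h
    apply Vp_coeff_wt hn
    rintro h'
    rw [h'] at h
    simp at h
  · intro h
    have := Vp_coeff_ne hn h1 m h
    simpa using this

theorem VC_rec (k n : ℕ) (hn : n ≤ k) :
    Vp ℂ k n = ev ℂ k n +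
      ∑ p ∈ Finset.HasAntidiagonal.antidiagonal n, ev ℂ k p.1 * Vp ℂ k p.2 := by
  have hev : ∀ n, MvPolynomial.map (Nat.castRingHom ℂ) (ev ℕ k n) = ev ℂ k n := by
    intro n
    unfold ev
    split_ifs <;> simp
  rw [← map_Vp, Vp_rec k n hn, map_add, map_sum, hev]
  congr 1
  refine Finset.sum_congr rfl fun p _ => ?_
  rw [map_mul, hev, map_Vp]

theorem VC_zero (k : ℕ) : Vp ℂ k 0 = 0 := by
  rw [← map_Vp, Vp_zero, map_zero]

theorem VC_monSupp {k : ℕ} (j : Fin k) : MonSupp (Vp ℂ k (j + 1)) := by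
  intro m hm
  have h := (VC_coeff (by omega) (by omega) m).1 hm
  constructor
  · rw [Nat.pos_iff_ne_zero]
    intro h0
    have : m = 0 := by
      ext i
      simpa using (Finset.sum_eq_zero_iff.1 h0) i (Finset.mem_univ _)
    subst this
    simp [wt] at h
  · have := sum_le_wt m
    omega

end part7

section part8

variable {k : ℕ}

/-- the value of a linear functional on an exponent -/
def lamOf (lam : Fin k → ℝ) (m : Fin k →₀ ℕ) : ℝ := ∑ i, (m i : ℝ) * lam i

theorem lamOf_add (lam : Fin k → ℝ) (m m' : Fin k →₀ ℕ) :
    lamOf lam (m + m') = lamOf lam m + lamOf lam m' := by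
  simp [lamOf, add_mul, Finset.sum_add_distrib]

theorem lamOf_single (lam : Fin k → ℝ) (i : Fin k) : lamOf lam (Finsupp.single i 1) = lam i := by
  classical
  unfold lamOf
  rw [Finset.sum_eq_single i]
  · simp
  · intro j _ hj
    simp [hj.symm]
  · simp

open Classical in
/-- the part of a polynomial on which the functional takes the value `c` -/
noncomputable def trunc (lam : Fin k → ℝ) (c : ℝ) (p : MvPolynomial (Fin k) ℂ) :
    MvPolynomial (Fin k) ℂ :=
  ∑ m ∈ p.support, if lamOf lam m = c then MvPolynomial.monomial m (MvPolynomial.coeff m p) else 0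

open Classical in
theorem coeff_trunc (lam : Fin k → ℝ) (c : ℝ) (p : MvPolynomial (Fin k) ℂ) (m : Fin k →₀ ℕ) :
    MvPolynomial.coeff m (trunc lam c p) =
      if lamOf lam m = c then MvPolynomial.coeff m p else 0 := by
  unfold trunc
  rw [MvPolynomial.coeff_sum]
  rw [Finset.sum_eq_single m]
  · split_ifs <;> simp
  · intro m' _ hm
    split_ifs
    · rw [MvPolynomial.coeff_monomial, if_neg hm]
    · simp
  · intro h
    rw [MvPolynomial.notMem_support_iff] at h
    rw [h]
    simp

theorem trunc_add (lam : Fin k → ℝ) (c : ℝ) (p q : MvPolynomial (Fin k) ℂ) :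
    trunc lam c (p + q) = trunc lam c p + trunc lam c q := by
  ext m
  simp only [coeff_trunc, MvPolynomial.coeff_add]
  split_ifs <;> simp

theorem trunc_zero (lam : Fin k → ℝ) (c : ℝ) : trunc lam c 0 = 0 := by
  ext m
  simp [coeff_trunc]

theorem trunc_sum {ι : Type*} (lam : Fin k → ℝ) (c : ℝ) (s : Finset ι)
    (f : ι → MvPolynomial (Fin k) ℂ) :
    trunc lam c (∑ i ∈ s, f i) = ∑ i ∈ s, trunc lam c (f i) := by
  classical
  induction s using Finset.induction_on with
  | empty => simp [trunc_zero]
  | insert a s ha ih => rw [Finset.sum_insert ha, Finset.sum_insert ha, trunc_add, ih]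

theorem trunc_X_mul (lam : Fin k → ℝ) (c : ℝ) (i : Fin k) (p : MvPolynomial (Fin k) ℂ) :
    trunc lam c (MvPolynomial.X i * p) = MvPolynomial.X i * trunc lam (c - lam i) p := by
  classical
  ext m
  rw [coeff_trunc, MvPolynomial.coeff_X_mul', MvPolynomial.coeff_X_mul']
  by_cases h : i ∈ m.support
  · obtain ⟨m', rfl⟩ := exists_sub (Finsupp.mem_support_iff.1 h)
    rw [if_pos h, if_pos h, add_tsub_cancel_left, coeff_trunc, lamOf_add, lamOf_single]
    have : lam i + lamOf lam m' = c ↔ lamOf lam m' = c - lam i := by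
      constructor <;> intro h <;> linarith
    simp only [this]
  · simp [h]

/-- extension of the functional to `ℕ` -/
noncomputable def Lx (lam : Fin k → ℝ) (n : ℕ) : ℝ :=
  if h : 1 ≤ n ∧ n ≤ k then lam ⟨n - 1, by omega⟩ else 0

theorem Lx_succ (lam : Fin k → ℝ) (i : Fin k) : Lx lam (i + 1) = lam i := by
  have h : 1 ≤ i.val + 1 ∧ i.val + 1 ≤ k := ⟨by omega, i.2⟩
  simp [Lx, h]

theorem exists_M (lam : Fin k → ℝ) (hk : 0 < k) :
    ∃ M : ℕ → ℝ, (∀ m, M (wt m) ≤ lamOf lam m) ∧ ∀ n, ∃ m, wt m = n ∧ lamOf lam m = M n := by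
  have key : ∀ n, ∃ m : Fin k →₀ ℕ, wt m = n ∧ ∀ m', wt m' = n → lamOf lam m ≤ lamOf lam m' := by
    intro n
    have hfin : {m : Fin k →₀ ℕ | wt m = n}.Finite := by
      refine (Set.finite_Iic (Finsupp.equivFunOnFinite.symm (fun _ => n) : Fin k →₀ ℕ)).subset ?_
      intro m hm i
      have h1 : m i ≤ ∑ i, m i := Finset.single_le_sum (fun _ _ => Nat.zero_le _) (Finset.mem_univ i)
      have h2 := sum_le_wt m
      have h3 : wt m = n := hm
      change m i ≤ n
      omega
    have hne : {m : Fin k →₀ ℕ | wt m = n}.Nonempty :=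
      ⟨Finsupp.single ⟨0, hk⟩ n, by simp [wt_single]⟩
    obtain ⟨m, hm, hmin⟩ := Set.exists_min_image _ (lamOf lam) hfin hne
    exact ⟨m, hm, hmin⟩
  choose mm h1 h2 using key
  exact ⟨fun n => lamOf lam (mm n), fun m => h2 _ m rfl, fun n => ⟨mm n, h1 n, rfl⟩⟩

theorem degen_of (lam : Fin k → ℝ) (hk : 0 < k) (M : ℕ → ℝ) (hM : ∀ m, M (wt m) ≤ lamOf lam m)
    (hM' : ∀ n, ∃ m, wt m = n ∧ lamOf lam m = M n) :
    Degen k (Lx lam) M (fun n => trunc lam (M n) (Vp ℂ k n)) := by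
  have hML : ∀ n, 1 ≤ n → n ≤ k → M n ≤ Lx lam n := by
    intro n h1 h2
    obtain ⟨i, rfl⟩ : ∃ i, n = i + 1 := ⟨n - 1, by omega⟩
    have := hM (Finsupp.single (⟨i, h2⟩ : Fin k) 1)
    rw [wt_single, lamOf_single, ← Lx_succ lam] at this
    simpa using this
  have hsub : ∀ i l, M (i + l) ≤ M i + M l := by
    intro i l
    obtain ⟨m, h1, h2⟩ := hM' i
    obtain ⟨m', h1', h2'⟩ := hM' l
    have := hM (m + m')
    rw [wt_add, lamOf_add, h1, h1', h2, h2'] at this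
    exact this
  have hM0 : M 0 = 0 := by
    obtain ⟨m, h1, h2⟩ := hM' 0
    rw [wt_eq_zero h1] at h2
    rw [← h2]
    simp [lamOf]
  refine ⟨hM0, ?_, hsub, hML, ?_, ?_⟩
  · refine le_antisymm (hML 1 le_rfl hk) ?_
    obtain ⟨m, h1, h2⟩ := hM' 1
    obtain ⟨i, hi⟩ : ∃ i, m i ≠ 0 := by
      by_contra h
      push Not at h
      have : m = 0 := Finsupp.ext h
      subst this
      simp [wt] at h1
    obtain ⟨m', rfl⟩ := exists_sub hi
    rw [wt_add, wt_single] at h1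
    have h3 := wt_eq_zero (show wt m' = 0 by omega)
    subst h3
    rw [add_zero, lamOf_single, ← Lx_succ lam] at h2
    have h4 : i.val = 0 := by omega
    rw [h4, zero_add] at h2
    rw [h2]
  · simp only [VC_zero, trunc_zero]
  · intro n h1 hn
    conv_lhs => rw [VC_rec k n hn, trunc_add, trunc_sum]
    congr 1
    · obtain ⟨i, rfl⟩ : ∃ i, n = i + 1 := ⟨n - 1, by omega⟩
      have e1 := ev_succ ℂ (⟨i, hn⟩ : Fin k)
      have e2 := Lx_succ lam (⟨i, hn⟩ : Fin k)
      simp only at e1 e2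
      rw [e1, e2]
      classical
      ext m
      rw [coeff_trunc, MvPolynomial.coeff_X]
      by_cases hm : Finsupp.single (⟨i, hn⟩ : Fin k) 1 = m
      · subst hm
        rw [lamOf_single]
        split_ifs <;> simp_all
      · rw [if_neg hm]
        split_ifs <;> simp [MvPolynomial.coeff_X, hm]
    · refine Finset.sum_congr rfl fun p hp => ?_
      rw [Finset.HasAntidiagonal.mem_antidiagonal] at hp
      by_cases hp1 : 1 ≤ p.1
      swap
      · have : p.1 = 0 := by omega
        simp [this, ev_zero, trunc_zero]
      obtain ⟨i, hi⟩ : ∃ i, p.1 = i + 1 := ⟨p.1 - 1, by omega⟩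
      have hik : i < k := by omega
      have e1 := ev_succ ℂ (⟨i, hik⟩ : Fin k)
      have e2 := Lx_succ lam (⟨i, hik⟩ : Fin k)
      simp only at e1 e2
      rw [hi, e1, trunc_X_mul, ← e2]
      split_ifs with h
      · rw [← h, add_sub_cancel_left]
      · rcases Nat.eq_zero_or_pos p.2 with h0 | h0
        · rw [h0, VC_zero, trunc_zero, mul_zero]
        convert mul_zero _
        ext m
        rw [coeff_trunc, MvPolynomial.coeff_zero]
        split_ifs with h3
        · by_contra h4
          have h5 := (VC_coeff (by omega) h0 m).1 h4
          have h6 := hM m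
          have h7 := hsub p.1 p.2
          have h8 := hML p.1 (by omega) (by omega)
          rw [hp] at h7
          rw [h5, h3] at h6
          rw [hi] at h8 h7
          apply h
          linarith
        · rfl

end part8

section part9

variable {k a b : ℕ}

theorem coeff_phiHom_diag (t : Fin k → ℂ) (p : MvPolynomial (Fin k) ℂ) (m : Fin k →₀ ℕ) :
    MvPolynomial.coeff m (phiHom (Matrix.diagonal t) p) =
      (∏ i, t i ^ m i) * MvPolynomial.coeff m p := by
  classical
  induction p using MvPolynomial.induction_on' with
  | monomial s c =>
    have hX : ∀ i, phiHom (Matrix.diagonal t) (MvPolynomial.X i) =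
        MvPolynomial.C (t i) * MvPolynomial.X i := by
      intro i
      rw [phiHom_X, Finset.sum_eq_single i]
      · simp [MvPolynomial.smul_eq_C_mul]
      · intro j _ hj
        simp [hj]
      · simp
    have : phiHom (Matrix.diagonal t) (MvPolynomial.monomial s c) =
        MvPolynomial.C (∏ i, t i ^ s i) * MvPolynomial.monomial s c := by
      rw [MvPolynomial.monomial_eq, Finsupp.prod_fintype _ _ (by simp), map_mul, map_prod]
      simp only [map_pow, hX, mul_pow, Finset.prod_mul_distrib, map_prod]
      have hC : phiHom (Matrix.diagonal t) (MvPolynomial.C c) = MvPolynomial.C c := by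
        simp [phiHom]
      rw [hC]
      ring
    rw [this, MvPolynomial.coeff_C_mul, MvPolynomial.coeff_monomial]
    split_ifs with h
    · rw [h]
    · simp
  | add p q hp hq =>
    rw [map_add, MvPolynomial.coeff_add, MvPolynomial.coeff_add, hp, hq]
    ring

/-- the exponent of the character on a coordinate -/
noncomputable def nexp (y : (Fin a → Fin k → Mon k k) × (Fin b → Fin k)) (i : Fin k) : ℕ :=
  ∑ i', ∑ l, mexp (y.1 i' l) i + ∑ j, if y.2 j = i then 1 else 0

theorem prod_nexp (y : (Fin a → Fin k → Mon k k) × (Fin b → Fin k)) (t : Fin k → ℂ) :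
    ∏ i, t i ^ nexp y i =
      (∏ i', ∏ l, ∏ i, t i ^ (mexp (y.1 i' l) i)) * ∏ j, t (y.2 j) := by
  unfold nexp
  simp only [pow_add, Finset.prod_mul_distrib, ← Finset.prod_pow_eq_pow_sum]
  congr 1
  · rw [Finset.prod_comm]
    refine Finset.prod_congr rfl fun i' _ => ?_
    rw [Finset.prod_comm]
  · rw [Finset.prod_comm]
    refine Finset.prod_congr rfl fun j _ => ?_
    simp

theorem lam_nexp (y : (Fin a → Fin k → Mon k k) × (Fin b → Fin k)) (lam : Fin k → ℝ) :
    ∑ i, (nexp y i : ℝ) * lam i =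
      (∑ i', ∑ l, lamOf lam (mexp (y.1 i' l))) + ∑ j, lam (y.2 j) := by
  unfold nexp lamOf
  push_cast
  simp only [add_mul, Finset.sum_add_distrib, Finset.sum_mul]
  congr 1
  · rw [Finset.sum_comm]
    refine Finset.sum_congr rfl fun i' _ => ?_
    rw [Finset.sum_comm]
  · rw [Finset.sum_comm]
    refine Finset.sum_congr rfl fun j _ => ?_
    simp

theorem wedge_scale (s : Mon k k → ℂ) (v : Fin k → Mon k k → ℂ) (mf : Fin k → Mon k k) :
    wedge (fun j m => s m * v j m) mf = (∏ l, s (mf l)) * wedge v mf := by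
  unfold wedge
  rw [Finset.mul_sum]
  refine Finset.sum_congr rfl fun σ _ => ?_
  rw [Finset.prod_mul_distrib]
  ring

theorem tens_diag (t : Fin k → ℂ) (u : Fin k → MvPolynomial (Fin k) ℂ) (v : Fin k → ℂ)
    (y : (Fin a → Fin k → Mon k k) × (Fin b → Fin k)) :
    tens a b (fun j => phiHom (Matrix.diagonal t) (u j)) ((Matrix.diagonal t).mulVec v) y =
      (∏ i, t i ^ nexp y i) * tens a b u v y := by
  have h1 : coords (fun j => phiHom (Matrix.diagonal t) (u j)) =
      fun j m => (∏ i, t i ^ mexp m i) * coords u j m := by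
    funext j m
    exact coeff_phiHom_diag t (u j) (mexp m)
  rw [prod_nexp]
  simp only [tens, h1, wedge_scale, Finset.prod_mul_distrib, Matrix.mulVec_diagonal]
  ring

theorem ptab_eq (hk : 0 < k) :
    ptab k a b = tens a b (fun j => Vp ℂ k (j + 1)) (Pi.single ⟨0, hk⟩ 1) := by
  funext y
  have he : e1 k = Pi.single ⟨0, hk⟩ 1 := by
    funext i
    simp [e1, Pi.single_apply, Fin.ext_iff]
  have hp : pkVec k = wedge (coords (fun j => Vp ℂ k (j + 1))) := by
    unfold pkVec wedgePhi
    congr 1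
    funext j m
    simp only [phiMat, coords, colPoly_one]
    rfl
  simp only [ptab, tens, he, hp]

theorem act_diag (hk : 0 < k) (t : Fin k → ℂ)
    (y : (Fin a → Fin k → Mon k k) × (Fin b → Fin k)) :
    actab (Matrix.diagonal t) (ptab k a b) y = (∏ i, t i ^ nexp y i) * ptab k a b y := by
  rw [ptab_eq hk, actab_tens _ _ (fun j => VC_monSupp j), tens_diag]

theorem coords_ne (j : Fin k) (m : Mon k k) :
    coords (fun j => Vp ℂ k (j + 1)) j m ≠ 0 ↔ wt (mexp m) = j + 1 :=
  VC_coeff (by omega) (by omega) _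

section face

variable (lam : Fin k → ℝ) (M : ℕ → ℝ) (hM : ∀ m, M (wt m) ≤ lamOf lam m)

theorem lam_ge_of_wedge (hM : ∀ m, M (wt m) ≤ lamOf lam m) (mf : Fin k → Mon k k)
    (h : wedge (coords (fun j => Vp ℂ k (j + 1))) mf ≠ 0) :
    ∑ j : Fin k, M (j + 1) ≤ ∑ l, lamOf lam (mexp (mf l)) := by
  obtain ⟨σ, _, hσ⟩ := Finset.exists_ne_zero_of_sum_ne_zero h
  have h1 := Finset.prod_ne_zero_iff.1 (right_ne_zero_of_mul hσ)
  rw [← Equiv.sum_comp σ]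
  refine Finset.sum_le_sum fun l _ => ?_
  have := (coords_ne _ _).1 (h1 l (Finset.mem_univ _))
  rw [← this]
  exact hM _

open Classical in
theorem wedge_trunc (hM : ∀ m, M (wt m) ≤ lamOf lam m) (mf : Fin k → Mon k k) :
    wedge (coords (fun j => trunc lam (M (j + 1)) (Vp ℂ k (j + 1)))) mf =
      if ∑ l, lamOf lam (mexp (mf l)) = ∑ j : Fin k, M (j + 1) then
        wedge (coords (fun j => Vp ℂ k (j + 1))) mf else 0 := by
  have key : ∀ σ : Equiv.Perm (Fin k),
      ∏ i, coords (fun j => trunc lam (M (j + 1)) (Vp ℂ k (j + 1))) (σ i) (mf i) =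
      if ∑ l, lamOf lam (mexp (mf l)) = ∑ j : Fin k, M (j + 1) then
        ∏ i, coords (fun j => Vp ℂ k (j + 1)) (σ i) (mf i) else 0 := by
    intro σ
    have hc : ∀ i, coords (fun j => trunc lam (M (j + 1)) (Vp ℂ k (j + 1))) (σ i) (mf i) =
        if lamOf lam (mexp (mf i)) = M (σ i + 1) then
          coords (fun j => Vp ℂ k (j + 1)) (σ i) (mf i) else 0 := by
      intro i
      exact coeff_trunc _ _ _ _
    simp only [hc]
    by_cases h0 : ∃ i, coords (fun j => Vp ℂ k (j + 1)) (σ i) (mf i) = 0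
    · obtain ⟨i, hi⟩ := h0
      rw [Finset.prod_eq_zero (Finset.mem_univ i) (by rw [hi]; simp),
        Finset.prod_eq_zero (Finset.mem_univ i) hi]
      simp
    · push Not at h0
      have hge : ∀ i, M (σ i + 1) ≤ lamOf lam (mexp (mf i)) := by
        intro i
        rw [← (coords_ne _ _).1 (h0 i)]
        exact hM _
      have hs : ∑ j : Fin k, M (j + 1) = ∑ i, M (σ i + 1) :=
        (Equiv.sum_comp σ (fun j : Fin k => M (j + 1))).symm
      by_cases hall : ∀ i, lamOf lam (mexp (mf i)) = M (σ i + 1)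
      · rw [if_pos]
        · refine Finset.prod_congr rfl fun i _ => ?_
          rw [if_pos (hall i)]
        · rw [hs]
          exact Finset.sum_congr rfl fun i _ => hall i
      · rw [if_neg]
        · push Not at hall
          obtain ⟨i, hi⟩ := hall
          exact Finset.prod_eq_zero (Finset.mem_univ i) (if_neg hi)
        · intro h
          apply hall
          rw [hs] at h
          intro i
          exact (((Finset.sum_eq_sum_iff_of_le (fun i _ => hge i)).1 h.symm) i
            (Finset.mem_univ _)).symm
  unfold wedge
  simp only [key]
  split_ifs <;> simp

theorem exists_min_wedge (hM' : ∀ n, ∃ m : Fin k →₀ ℕ, wt m = n ∧ lamOf lam m = M n) :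
    ∃ mf : Fin k → Mon k k, wedge (coords (fun j => Vp ℂ k (j + 1))) mf ≠ 0 ∧
      ∑ l, lamOf lam (mexp (mf l)) = ∑ j : Fin k, M (j + 1) := by
  have : ∀ j : Fin k, ∃ m : Mon k k, wt (mexp m) = j + 1 ∧ lamOf lam (mexp m) = M (j + 1) := by
    intro j
    obtain ⟨m, h1, h2⟩ := hM' (j + 1)
    have hs := VC_monSupp j m ((VC_coeff (by omega) (by omega) m).2 h1)
    have hm : mexp (⟨fun i => m i, hs⟩ : Mon k k) = m := by
      ext i; rfl
    exact ⟨⟨fun i => m i, hs⟩, by rw [hm, h1], by rw [hm, h2]⟩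
  choose mf h1 h2 using this
  refine ⟨mf, ?_, Finset.sum_congr rfl fun j _ => h2 j⟩
  unfold wedge
  rw [Finset.sum_eq_single 1]
  · simp only [Equiv.Perm.sign_one, Units.val_one, Int.cast_one, one_mul, Equiv.Perm.one_apply]
    rw [Finset.prod_ne_zero_iff]
    intro i _
    rw [coords_ne, h1]
  · intro σ _ hσ
    by_contra h
    apply hσ
    have h3 := Finset.prod_ne_zero_iff.1 (right_ne_zero_of_mul h)
    ext i
    have := (coords_ne _ _).1 (h3 i (Finset.mem_univ _))
    rw [h1] at this
    simp
    omega
  · simp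

theorem y2_zero (hk : 0 < k) (y : (Fin a → Fin k → Mon k k) × (Fin b → Fin k))
    (hy : ptab k a b y ≠ 0) :
    (∀ i, wedge (coords (fun j => Vp ℂ k (j + 1))) (y.1 i) ≠ 0) ∧ ∀ j, y.2 j = ⟨0, hk⟩ := by
  rw [ptab_eq hk] at hy
  refine ⟨fun i => Finset.prod_ne_zero_iff.1 (left_ne_zero_of_mul hy) i (Finset.mem_univ _), ?_⟩
  intro j
  have := Finset.prod_ne_zero_iff.1 (right_ne_zero_of_mul hy) j (Finset.mem_univ _)
  by_contra h
  exact this (by simp [h])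

theorem lam_nexp_supp (hk : 0 < k) (y : (Fin a → Fin k → Mon k k) × (Fin b → Fin k))
    (hy : ptab k a b y ≠ 0) :
    ∑ i, (nexp y i : ℝ) * lam i =
      (∑ i', ∑ l, lamOf lam (mexp (y.1 i' l))) + b * lam ⟨0, hk⟩ := by
  rw [lam_nexp]
  congr 1
  simp [(y2_zero hk y hy).2]

theorem lam_nexp_ge (hM : ∀ m, M (wt m) ≤ lamOf lam m) (hk : 0 < k)
    (y : (Fin a → Fin k → Mon k k) × (Fin b → Fin k)) (hy : ptab k a b y ≠ 0) :
    a * (∑ j : Fin k, M (j + 1)) + b * lam ⟨0, hk⟩ ≤ ∑ i, (nexp y i : ℝ) * lam i := by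
  rw [lam_nexp_supp lam hk y hy]
  have : ∑ _i' : Fin a, (∑ j : Fin k, M (j + 1)) ≤ ∑ i', ∑ l, lamOf lam (mexp (y.1 i' l)) :=
    Finset.sum_le_sum fun i' _ => lam_ge_of_wedge lam M hM _ ((y2_zero hk y hy).1 i')
  simp only [Finset.sum_const, Finset.card_univ, Fintype.card_fin, nsmul_eq_mul] at this
  linarith

theorem exists_min_y (hM' : ∀ n, ∃ m : Fin k →₀ ℕ, wt m = n ∧ lamOf lam m = M n) (hk : 0 < k) :
    ∃ y : (Fin a → Fin k → Mon k k) × (Fin b → Fin k), ptab k a b y ≠ 0 ∧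
      ∑ i, (nexp y i : ℝ) * lam i = a * (∑ j : Fin k, M (j + 1)) + b * lam ⟨0, hk⟩ := by
  obtain ⟨mf, h1, h2⟩ := exists_min_wedge lam M hM'
  refine ⟨(fun _ => mf, fun _ => ⟨0, hk⟩), ?_, ?_⟩
  · rw [ptab_eq hk]
    simp [tens, h1]
  · rw [lam_nexp]
    simp [h2]

open Classical in
theorem tens_trunc (hM : ∀ m, M (wt m) ≤ lamOf lam m) (hk : 0 < k)
    (h0 : a * (∑ j : Fin k, M (j + 1)) + b * lam ⟨0, hk⟩ = 0)
    (y : (Fin a → Fin k → Mon k k) × (Fin b → Fin k)) :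
    tens a b (fun j => trunc lam (M (j + 1)) (Vp ℂ k (j + 1))) (Pi.single ⟨0, hk⟩ 1) y =
      if ptab k a b y ≠ 0 ∧ ∑ i, (nexp y i : ℝ) * lam i = 0 then ptab k a b y else 0 := by
  have hT : tens a b (fun j => trunc lam (M (j + 1)) (Vp ℂ k (j + 1))) (Pi.single ⟨0, hk⟩ 1) y =
      (∏ i, if ∑ l, lamOf lam (mexp (y.1 i l)) = ∑ j : Fin k, M (j + 1) then
        wedge (coords (fun j => Vp ℂ k (j + 1))) (y.1 i) else 0) *
        ∏ j, (Pi.single ⟨0, hk⟩ 1 : Fin k → ℂ) (y.2 j) := by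
    simp only [tens, wedge_trunc lam M hM]
  rw [hT]
  by_cases hy : ptab k a b y ≠ 0
  · have hge : ∀ i, ∑ j : Fin k, M (j + 1) ≤ ∑ l, lamOf lam (mexp (y.1 i l)) :=
      fun i => lam_ge_of_wedge lam M hM _ ((y2_zero hk y hy).1 i)
    have hs : ∑ _i' : Fin a, (∑ j : Fin k, M (j + 1)) = a * ∑ j : Fin k, M (j + 1) := by
      simp
    by_cases hall : ∀ i, ∑ l, lamOf lam (mexp (y.1 i l)) = ∑ j : Fin k, M (j + 1)
    · rw [if_pos]
      · rw [ptab_eq hk]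
        simp only [hall, if_true, tens]
      · refine ⟨hy, ?_⟩
        rw [lam_nexp_supp lam hk y hy, ← h0, ← hs]
        congr 1
        exact Finset.sum_congr rfl fun i _ => hall i
    · rw [if_neg]
      · push Not at hall
        obtain ⟨i, hi⟩ := hall
        rw [Finset.prod_eq_zero (Finset.mem_univ i) (if_neg hi), zero_mul]
      · rintro ⟨_, h⟩
        apply hall
        rw [lam_nexp_supp lam hk y hy, ← h0, ← hs] at h
        have h' := add_right_cancel h
        intro i
        exact (((Finset.sum_eq_sum_iff_of_le (fun i _ => hge i)).1 h'.symm) i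
            (Finset.mem_univ _)).symm
  · rw [if_neg (fun h => hy h.1)]
    push Not at hy
    rw [ptab_eq hk] at hy
    rcases mul_eq_zero.1 hy with h | h
    · obtain ⟨i, _, hi⟩ := Finset.prod_eq_zero_iff.1 h
      rw [Finset.prod_eq_zero (Finset.mem_univ i) (by rw [hi]; simp), zero_mul]
    · rw [h, mul_zero]

end face

open Classical in
theorem closure_point (hk : 0 < k) (x : Wab k a b)
    (hx : x ∈ closure {w : Wab k a b | ∃ g ∈ Tset k, w = actab g (ptab k a b)}) :
    ∃ (τ : Fin k → ℂ) (lam : Fin k → ℝ), (∀ i, τ i ≠ 0) ∧ ∏ i, τ i = 1 ∧ ∑ i, lam i = 0 ∧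
      (∀ y, ptab k a b y ≠ 0 → 0 ≤ ∑ i, (nexp y i : ℝ) * lam i) ∧
      ∀ y, x y = if ptab k a b y ≠ 0 ∧ ∑ i, (nexp y i : ℝ) * lam i = 0 then
        (∏ i, τ i ^ nexp y i) * ptab k a b y else 0 := by
  rw [mem_closure_iff_seq_limit] at hx
  obtain ⟨w, hw, hlim⟩ := hx
  choose g hg hwg using hw
  have hdiag : ∀ s, g s = Matrix.diagonal fun i => g s i i := by
    intro s
    ext i j
    rw [Matrix.diagonal_apply]
    split_ifs with h
    · rw [h]
    · exact (hg s).2 i j h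
  have hprod : ∀ s, ∏ i, g s i i = 1 := by
    intro s
    have := (hg s).1
    rw [hdiag s, Matrix.det_diagonal] at this
    exact this
  have hne : ∀ s i, g s i i ≠ 0 := by
    intro s i h
    have := hprod s
    rw [Finset.prod_eq_zero (f := fun i => g s i i) (Finset.mem_univ i) h] at this
    exact zero_ne_one this
  have hwy : ∀ s y, w s y = (∏ i, g s i i ^ nexp y i) * ptab k a b y := by
    intro s y
    rw [hwg s, hdiag s, act_diag hk]
    simp
  have hlimy : ∀ y, Filter.Tendsto (fun s => w s y) Filter.atTop (nhds (x y)) :=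
    fun y => (tendsto_pi_nhds.1 hlim) y
  obtain ⟨τ, hτ, lam, hlam⟩ := toric
    (fun (o : Option {y // ptab k a b y ≠ 0}) => match o with
      | none => fun _ => 1
      | some y => nexp y.1) (fun s i => g s i i) hne
    (fun o => match o with
      | none => 1
      | some y => x y.1 / ptab k a b y.1) (by
      rintro (_ | ⟨y, hy⟩)
      · simp [hprod]
      · have := (hlimy y).div_const (ptab k a b y)
        refine this.congr fun s => ?_
        rw [hwy, mul_div_assoc, div_self hy, mul_one])
  have hn := hlam none
  simp only [Nat.cast_one, one_mul, pow_one] at hn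
  have hs0 : ∑ i, lam i = 0 := by
    by_contra h
    rw [if_neg h] at hn
    exact one_ne_zero hn.2
  rw [if_pos hs0] at hn
  refine ⟨τ, lam, hτ, hn.2.symm, hs0, fun y hy => (hlam (some ⟨y, hy⟩)).1, fun y => ?_⟩
  by_cases hy : ptab k a b y ≠ 0
  · have h := (hlam (some ⟨y, hy⟩)).2
    simp only at h
    rw [div_eq_iff hy] at h
    rw [h]
    by_cases hz : ∑ i, (nexp y i : ℝ) * lam i = 0
    · rw [if_pos hz, if_pos ⟨hy, hz⟩]
    · rw [if_neg hz, if_neg (fun h => hz h.2), zero_mul]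
  · rw [if_neg (fun h => hy h.1)]
    push Not at hy
    refine tendsto_nhds_unique (hlimy y) ?_
    simp [hwy, hy]

theorem main_aux (hk : 4 ≤ k) (ha : 0 < a) (hb : 0 < b) (x : Wab k a b)
    (hx : x ∈ closure {w : Wab k a b | ∃ g ∈ Tset k, w = actab g (ptab k a b)}) :
    x ∈ {w : Wab k a b | ∃ g ∈ Tset k, w = actab g (ptab k a b)} ∨
      ((2 * (k + 1) : ℕ) : ℝ≥0∞) ≤ dimH (stabSet x) := by
  classical
  have hk0 : 0 < k := by omega
  obtain ⟨τ, lam, hτ, hτ1, hs0, hnn, hxy⟩ := closure_point hk0 x hx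
  by_cases hall : ∀ y, ptab k a b y ≠ 0 → ∑ i, (nexp y i : ℝ) * lam i = 0
  · left
    refine ⟨Matrix.diagonal τ, ⟨by rw [Matrix.det_diagonal, hτ1], fun i j h => by simp [h]⟩, ?_⟩
    funext y
    rw [hxy y, act_diag hk0]
    by_cases hy : ptab k a b y ≠ 0
    · rw [if_pos ⟨hy, hall y hy⟩]
    · rw [if_neg (fun h => hy h.1)]
      push Not at hy
      rw [hy, mul_zero]
  right
  obtain ⟨M, hM, hM'⟩ := exists_M lam hk0
  have hge := fun y hy => lam_nexp_ge (a := a) (b := b) lam M hM hk0 y hy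
  obtain ⟨y0, hy0, hy0'⟩ := exists_min_y (a := a) (b := b) lam M hM' hk0
  have hm0 : 0 ≤ a * (∑ j : Fin k, M (j + 1)) + b * lam ⟨0, hk0⟩ := hy0' ▸ hnn y0 hy0
  rcases hm0.lt_or_eq with hpos | hzero
  · have : x = 0 := by
      funext y
      rw [hxy y, if_neg]
      · rfl
      · rintro ⟨h1, h2⟩
        have := hge y h1
        linarith
    rw [this]
    exact dim_stab_zero (k + 1) (by nlinarith)
  · have hD := degen_of lam hk0 M hM hM'
    have hL1 : Lx lam 1 = lam ⟨0, hk0⟩ := Lx_succ lam ⟨0, hk0⟩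
    have hfin := hD.finrank_ge a b ha hb hk hk0 (by simp only [Lx_succ]; exact hs0)
      (by
        by_contra h
        push Not at h
        apply hall
        intro y _
        refine Finset.sum_eq_zero fun i _ => ?_
        rw [← Lx_succ lam i, h i, mul_zero])
      (by rw [hL1]; exact hzero.symm)
    have hxt : x = tens a b (fun j => phiHom (Matrix.diagonal τ)
        (trunc lam (M (j + 1)) (Vp ℂ k (j + 1))))
        ((Matrix.diagonal τ).mulVec (Pi.single ⟨0, hk0⟩ 1)) := by
      funext y
      rw [tens_diag, tens_trunc lam M hM hk0 hzero.symm, hxy y]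
      split_ifs <;> simp
    rw [hxt]
    refine dim_stab_tens (fun j : Fin k => trunc lam (M (j + 1)) (Vp ℂ k (j + 1))) ⟨0, hk0⟩
      (Matrix.diagonal τ) (Matrix.diagonal fun i => (τ i)⁻¹) ?_ ?_ (k + 1) hfin
    · rw [Matrix.diagonal_mul_diagonal, ← Matrix.diagonal_one]
      congr 1
      funext i
      exact inv_mul_cancel₀ (hτ i)
    · intro j m hm
      rw [coeff_phiHom_diag, coeff_trunc] at hm
      apply VC_monSupp j m
      intro h
      rw [h] at hm
      simp at hm

end part9

/-- For `k ≥ 4` there is a constant `C(k)` such that for all strictly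
positive integers `a`, `b` with `b/a > C(k)`: every point of the closure of the
`T_k`-orbit of `p_k^{⊗a} ⊗ e₁^{⊗b}` (where `T_k` is the standard maximal torus of
`SL(k,ℂ)`) either lies in that orbit, or its stabiliser in `SL(k,ℂ)` has (complex)
dimension at least `k+1`, i.e. Hausdorff dimension at least `2(k+1)`. -/
theorem torus_orbit_closure (k : ℕ) (hk : 4 ≤ k) :
    ∃ C : ℝ, ∀ a b : ℕ, 0 < a → 0 < b → C < (b : ℝ) / (a : ℝ) →
      ∀ x ∈ closure {w : Wab k a b | ∃ g ∈ Tset k, w = actab g (ptab k a b)},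
        x ∈ {w : Wab k a b | ∃ g ∈ Tset k, w = actab g (ptab k a b)} ∨
          ((2 * (k + 1) : ℕ) : ℝ≥0∞) ≤ dimH (stabSet x) := by
  exact ⟨0, fun a b ha hb _ x hx => main_aux hk ha hb x hx⟩

end JetPaper
end
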